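/- Assume I(t,·) ∈ C^{2,1}_loc(Z;ℝ), the energy is κ-uniformly convex, |ℓ|_Lip ≤ κ − δ for some δ ∈ (0,κ], ℓ ∈ W^{1,∞}([0,T];V*) and ℓ′ ∈ BV([0,T];V). Then there is a unique differential solution z of the rate-independent system, and the piecewise affine interpolants z_τ in physical time of the iterates of the local incremental minimization scheme converge to z with the a priori error estimate ‖z_τ(t) − z(t)‖_Z ≤ K τ for all t ∈ [0,T], where K > 0 depends on α, κ, ℓ, z₀, T, F and ‖A‖_{L(Z,Z*)} but not on τ. -/

import Mathlib

open MeasureTheory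
open scoped RealInnerProductSpace NNReal

noncomputable section

namespace RIS

variable {Z V X : Type*}
  [NormedAddCommGroup Z] [InnerProductSpace ℝ Z] [CompleteSpace Z]
  [NormedAddCommGroup V] [InnerProductSpace ℝ V] [CompleteSpace V]
  [NormedAddCommGroup X] [NormedSpace ℝ X]

/-- The convex subdifferential of `R : V → ℝ` at `u`, as a subset of the dual `V →L[ℝ] ℝ`. -/
def subdiff (R : V → ℝ) (u : V) : Set (V →L[ℝ] ℝ) :=
  {ξ | ∀ v : V, R u + ξ (v - u) ≤ R v}

/-- The semilinear energy `I(t,z) = ½⟨Az,z⟩ + F(z) − ⟨ℓ(t), z⟩`. -/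
def energy (A : Z →L[ℝ] Z →L[ℝ] ℝ) (F : Z → ℝ) (ℓ : ℝ → V →L[ℝ] ℝ)
    (ι : Z →L[ℝ] V) (t : ℝ) (z : Z) : ℝ :=
  (1 / 2 : ℝ) * A z z + F z - ℓ t (ι z)

/-- `D_z I(t,z) = Az + D_zF(z) − ℓ(t)`, as an element of `Z*` (here `D_zF(z)` and `ℓ(t)`
are elements of `V*`, composed with the embedding `ι : Z ↪ V`). -/
def DI (A : Z →L[ℝ] Z →L[ℝ] ℝ) (DF : Z → V →L[ℝ] ℝ) (ℓ : ℝ → V →L[ℝ] ℝ)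
    (ι : Z →L[ℝ] V) (t : ℝ) (z : Z) : Z →L[ℝ] ℝ :=
  A z + (DF z).comp ι - (ℓ t).comp ι

/-- Local stability: `0 ∈ ∂R(0) + D_z I(t,z)`. -/
def LocStable (R : V → ℝ) (A : Z →L[ℝ] Z →L[ℝ] ℝ) (DF : Z → V →L[ℝ] ℝ)
    (ℓ : ℝ → V →L[ℝ] ℝ) (ι : Z →L[ℝ] V) (t : ℝ) (z : Z) : Prop :=
  ∃ ξ ∈ subdiff R 0, ξ.comp ι + DI A DF ℓ ι t z = 0

/-- The local incremental minimization scheme with step size `τ`: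
`z_{k+1}` minimizes `I(t_k, ·) + R(· − z_k)` over the ball `‖· − z_k‖_V ≤ τ`
and `t_{k+1} = min{t_k + τ − ‖z_{k+1} − z_k‖_V, T}`, starting from `t_0 = 0`, `z_0 = z₀`. -/
def Scheme (A : Z →L[ℝ] Z →L[ℝ] ℝ) (F : Z → ℝ) (R : V → ℝ) (ℓ : ℝ → V →L[ℝ] ℝ)
    (ι : Z →L[ℝ] V) (T τ : ℝ) (z₀ : Z) (t : ℕ → ℝ) (z : ℕ → Z) : Prop :=
  t 0 = 0 ∧ z 0 = z₀ ∧
    ∀ k : ℕ,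
      ‖ι (z (k + 1) - z k)‖ ≤ τ ∧
      (∀ w : Z, ‖ι (w - z k)‖ ≤ τ →
        energy A F ℓ ι (t k) (z (k + 1)) + R (ι (z (k + 1) - z k)) ≤
          energy A F ℓ ι (t k) w + R (ι (w - z k))) ∧
      t (k + 1) = min (t k + τ - ‖ι (z (k + 1) - z k)‖) T

/-- Standing assumptions on the data of the rate-independent system. -/
def StandingAssumptions (ι : Z →L[ℝ] V) (ιX : V →L[ℝ] X)
    (A : Z →L[ℝ] Z →L[ℝ] ℝ) (α : ℝ) (F : Z → ℝ) (DF : Z → V →L[ℝ] ℝ)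
    (D2F : Z → Z →L[ℝ] V →L[ℝ] ℝ) (R : V → ℝ) (ℓ : ℝ → V →L[ℝ] ℝ)
    (L T : ℝ) : Prop :=
  Function.Injective (ι : Z → V) ∧ DenseRange (ι : Z → V) ∧ (∀ w : Z, ‖ι w‖ ≤ ‖w‖) ∧
  Function.Injective (ιX : V → X) ∧
  (∀ z w : Z, A z w = A w z) ∧ 0 < α ∧ (∀ w : Z, α * ‖w‖ ^ 2 ≤ A w w) ∧
  (∀ w : Z, 0 ≤ F w) ∧
  (∀ w : Z, HasFDerivAt F ((DF w).comp ι) w) ∧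
  (∀ w : Z, HasFDerivAt DF (D2F w) w) ∧
  (∃ CF q : ℝ, 0 < CF ∧ 1 ≤ q ∧ ∀ w v : Z, ‖D2F w v‖ ≤ CF * (1 + ‖w‖ ^ q) * ‖v‖) ∧
  0 ≤ L ∧ LipschitzOnWith (Real.toNNReal L) ℓ (Set.Icc 0 T) ∧ 0 < T ∧
  ConvexOn ℝ Set.univ R ∧ LowerSemicontinuous R ∧ (∀ v : V, 0 ≤ R v) ∧
  (∀ (c : ℝ) (v : V), 0 ≤ c → R (c • v) = c * R v) ∧
  (∃ ρ₁ ρ₂ : ℝ, 0 < ρ₁ ∧ 0 < ρ₂ ∧ ∀ v : V, ρ₁ * ‖ιX v‖ ≤ R v ∧ R v ≤ ρ₂ * ‖v‖)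

/-- `κ`-uniform convexity of the energy: `⟨D²_zI(t,z)v,v⟩ ≥ κ‖v‖²_Z`, where
`D²_zI(t,z)[v,v] = ⟨Av,v⟩ + ⟨D²F(z)v, v⟩`. -/
def UniformlyConvex (A : Z →L[ℝ] Z →L[ℝ] ℝ) (D2F : Z → Z →L[ℝ] V →L[ℝ] ℝ)
    (ι : Z →L[ℝ] V) (κ : ℝ) : Prop :=
  0 < κ ∧ ∀ w v : Z, κ * ‖v‖ ^ 2 ≤ A v v + D2F w v (ι v)

/-- A differential solution of the rate-independent system: `y ∈ W^{1,1}(0,T;Z)`,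
`y(0) = z₀` and `0 ∈ ∂R(y'(t)) + D_zI(t, y(t))` for a.e. `t ∈ (0,T)`. -/
def IsDiffSol (A : Z →L[ℝ] Z →L[ℝ] ℝ) (DF : Z → V →L[ℝ] ℝ) (ℓ : ℝ → V →L[ℝ] ℝ)
    (R : V → ℝ) (ι : Z →L[ℝ] V) (T : ℝ) (z₀ : Z) (y : ℝ → Z) : Prop :=
  y 0 = z₀ ∧
  ∃ y' : ℝ → Z,
    IntervalIntegrable y' volume 0 T ∧
    (∀ s ∈ Set.Icc (0 : ℝ) T, y s = z₀ + ∫ r in (0 : ℝ)..s, y' r) ∧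
    (∀ᵐ s ∂(volume.restrict (Set.Ioo (0 : ℝ) T)),
      ∃ ξ ∈ subdiff R (ι (y' s)), ξ.comp ι + DI A DF ℓ ι s (y s) = 0)

/-!
Write `B z = Az + D_zF(z)`, and let `K` be the set of forces `σ` with `σ v ≤ R v` for all `v`. Since
`R` is sublinear, the flow rule says that the force `ℓ - B z` lies in `K` and maximizes the power
along `z'` over `K`: a sweeping process. Uniform convexity and `L < κ` bound the increment of each
minimizer by `Λ = L / κ < 1` times the last time step, so that the constraint of the scheme is never
active and, up to a shift of one node, the scheme is the implicit Euler scheme of this process.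

Interpolate the nodes and their forces affinely. The interpolated force stays in the convex set `K`;
it fails to be the force of the interpolated state by at most `τ` times the local variation of `ℓ'`
and `B`, and it fails to be maximal by the power `(σ_{k+1} - σ_k) v_k ≥ 0` of its own increment. The
flow rules of consecutive steps make the latter telescope against the discrete kinetic energy
`½ D²I(z_k)[v_k, v_k]`, so the residuals have sum `O(τ²)` even though each of them is only `O(τ)`.
A Gronwall inequality for the convexity gap `(B u - B y) (u - y)` turns a residual with integral
`O(τ²)` into a distance `O(τ)`. Applied to two step sizes it yields convergence with the rate, and
applied without residuals it yields uniqueness.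
-/

section

open Set Filter Function
open scoped Topology

section Sublinear

variable {E W : Type*} [NormedAddCommGroup E] [NormedSpace ℝ E]
  [NormedAddCommGroup W] [InnerProductSpace ℝ W]

/-- Subadditive and positively `1`-homogeneous functionals, the form in which the convex
dissipation potential enters the arguments. -/
structure IsSublinear (j : E → ℝ) : Prop where
  add_le : ∀ v w, j (v + w) ≤ j v + j w
  smul : ∀ (c : ℝ) v, 0 ≤ c → j (c • v) = c * j v

/-- The elastic domain `∂j(0)` of a sublinear functional: the forces that cannot start a motion. -/
def stableForces (j : E → ℝ) : Set (E →L[ℝ] ℝ) :=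
  {σ | ∀ v, σ v ≤ j v}

lemma isClosed_stableForces (j : E → ℝ) : IsClosed (stableForces j) := by
  simp only [stableForces, ofPred_forall]
  exact isClosed_iInter fun v => isClosed_le (by fun_prop) continuous_const

lemma convex_stableForces (j : E → ℝ) : Convex ℝ (stableForces j) := by
  simp only [stableForces, ofPred_forall]
  exact convex_iInter fun v => convex_halfSpace_le ⟨fun _ _ => rfl, fun _ _ => rfl⟩ (j v)

lemma isSublinear_of_convexOn {j : E → ℝ} (hconv : ConvexOn ℝ univ j)
    (hsmul : ∀ (c : ℝ) v, 0 ≤ c → j (c • v) = c * j v) : IsSublinear j where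
  add_le v w := by
    have hmid := hconv.2 (mem_univ ((2 : ℝ) • v)) (mem_univ ((2 : ℝ) • w))
      one_half_pos.le one_half_pos.le (add_halves 1)
    rw [smul_smul, smul_smul, hsmul 2 v zero_le_two, hsmul 2 w zero_le_two] at hmid
    norm_num at hmid
    linarith
  smul := hsmul

namespace IsSublinear

lemma map_zero {j : E → ℝ} (hj : IsSublinear j) : j 0 = 0 := by
  simpa using hj.smul 0 0 le_rfl

lemma comp_clm {R : W → ℝ} (hR : IsSublinear R) (ι : E →L[ℝ] W) :
    IsSublinear fun v => R (ι v) where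
  add_le v w := by simpa only [map_add] using hR.add_le (ι v) (ι w)
  smul c v hc := by simpa only [map_smul] using hR.smul c (ι v) hc

lemma exists_stableForces_comp_eq {R : W → ℝ} (hR : IsSublinear R) {ρ : ℝ}
    (hρ : ∀ v, R v ≤ ρ * ‖v‖) (ι : E →L[ℝ] W) {σ : E →L[ℝ] ℝ}
    (hσ : σ ∈ stableForces fun v => R (ι v)) : ∃ ξ ∈ stableForces R, ξ.comp ι = σ := by
  have hker : ∀ v w, ι v = ι w → σ v = σ w := fun v w hvw => by
    have h₁ := hσ (v - w)
    have h₂ := hσ (w - v)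
    simp only [map_sub, hvw, sub_self, hR.map_zero] at h₁ h₂
    linarith
  obtain ⟨s, hs⟩ := (ι : E →ₗ[ℝ] W).rangeRestrict.exists_rightInverse_of_surjective
    (LinearMap.range_rangeRestrict _)
  have hιs : ∀ w, ι (s w) = w := fun w => congrArg Subtype.val (LinearMap.congr_fun hs w)
  obtain ⟨g, hgext, hgle⟩ := exists_extension_of_le_sublinear
    ⟨LinearMap.range (ι : E →ₗ[ℝ] W), (σ : E →ₗ[ℝ] ℝ) ∘ₗ s⟩ R
    (fun c hc v => hR.smul c v hc.le) hR.add_le fun w => (hσ (s w)).trans_eq (congrArg R (hιs w))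
  have hgbound : ∀ v, ‖g v‖ ≤ ρ * ‖v‖ := fun v => abs_le.2
    ⟨by simpa [neg_le] using (hgle (-v)).trans (hρ (-v)), (hgle v).trans (hρ v)⟩
  refine ⟨g.mkContinuous ρ hgbound, hgle, ContinuousLinearMap.ext fun v => ?_⟩
  exact (hgext ⟨ι v, v, rfl⟩).trans (hker _ _ (hιs _))

lemma exists_stableForces_apply_eq {R : W → ℝ} (hR : IsSublinear R) {ρ : ℝ}
    (hρ : ∀ v, R v ≤ ρ * ‖v‖) (u : W) : ∃ ξ ∈ stableForces R, ξ u = R u := by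
  have hσ : R u • ContinuousLinearMap.id ℝ ℝ ∈
      stableForces fun c => R (ContinuousLinearMap.toSpanSingleton ℝ u c) := fun c => by
    simp only [smul_apply, ContinuousLinearMap.id_apply, smul_eq_mul,
      ContinuousLinearMap.toSpanSingleton_apply]
    rcases le_total 0 c with hc | hc
    · rw [hR.smul c u hc, mul_comm]
    · have hadd := hR.add_le (c • u) (-c • u)
      rw [← add_smul, add_neg_cancel, zero_smul, hR.map_zero, hR.smul (-c) u (by linarith)] at hadd
      linarith
  obtain ⟨ξ, hξ, hcomp⟩ := hR.exists_stableForces_comp_eq hρ _ hσ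
  exact ⟨ξ, hξ, by simpa using DFunLike.congr_fun hcomp 1⟩

lemma mem_subdiff_iff {R : W → ℝ} (hR : IsSublinear R) {u : W} {ξ : W →L[ℝ] ℝ} :
    ξ ∈ subdiff R u ↔ ξ ∈ stableForces R ∧ R u ≤ ξ u := by
  refine ⟨fun h => ⟨fun v => ?_, ?_⟩, fun ⟨hst, hRu⟩ v => ?_⟩
  · have huv := h (u + v)
    rw [add_sub_cancel_left] at huv
    linarith [hR.add_le u v]
  · have h₀ := h 0
    rw [zero_sub, map_neg, hR.map_zero] at h₀
    linarith
  · rw [map_sub]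
    linarith [hst v, hRu]

/-- The chain rule `∂(R ∘ ι)(u) = ι* ∂R(ι u)` turns the flow rule into the statement that `u` is
normal to the elastic domain of `R ∘ ι` at the driving force. -/
lemma exists_subdiff_comp_eq_iff {R : W → ℝ} (hR : IsSublinear R) {ρ : ℝ}
    (hρ : ∀ v, R v ≤ ρ * ‖v‖) (ι : E →L[ℝ] W) {u : E} {σ : E →L[ℝ] ℝ} :
    (∃ ξ ∈ subdiff R (ι u), ξ.comp ι = σ) ↔
      σ ∈ stableForces (fun v => R (ι v)) ∧
        ∀ η ∈ stableForces (fun v => R (ι v)), η u ≤ σ u := by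
  refine ⟨?_, fun ⟨hσ, hnormal⟩ => ?_⟩
  · rintro ⟨ξ, hξ, rfl⟩
    obtain ⟨hst, hu⟩ := hR.mem_subdiff_iff.1 hξ
    exact ⟨fun v => hst (ι v), fun η hη => (hη u).trans hu⟩
  · obtain ⟨ξ, hξ, rfl⟩ := hR.exists_stableForces_comp_eq hρ ι hσ
    obtain ⟨ζ, hζ, hζu⟩ := hR.exists_stableForces_apply_eq hρ (ι u)
    have hζξ := hnormal (ζ.comp ι) fun v => hζ (ι v)
    exact ⟨ξ, hR.mem_subdiff_iff.2 ⟨hξ, hζu.symm.trans_le hζξ⟩, rfl⟩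

end IsSublinear

end Sublinear

section Calculus

variable {E : Type*} [NormedAddCommGroup E] [NormedSpace ℝ E]
  {B : E → E →L[ℝ] ℝ} {H : E → E →L[ℝ] E →L[ℝ] ℝ} {κ C r : ℝ}

/-- `B` is the differential of a `κ`-uniformly convex potential with Hessian `H`, and `H` is
`C`-Lipschitz on the ball of radius `r`, the region in which all trajectories stay. -/
structure IsConvexGradient (B : E → E →L[ℝ] ℝ) (H : E → E →L[ℝ] E →L[ℝ] ℝ) (κ C r : ℝ) : Prop where
  κ_pos : 0 < κ
  C_nonneg : 0 ≤ C
  hasFDerivAt : ∀ x, HasFDerivAt B (H x) x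
  symm : ∀ x v w, H x v w = H x w v
  coercive : ∀ x v, κ * ‖v‖ ^ 2 ≤ H x v v
  lipschitz : ∀ x y, ‖x‖ ≤ r → ‖y‖ ≤ r → ‖H x - H y‖ ≤ C * ‖x - y‖

namespace IsConvexGradient

lemma mul_norm_sub_sq_le (hB : IsConvexGradient B H κ C r) (x y : E) :
    κ * ‖x - y‖ ^ 2 ≤ (B x - B y) (x - y) := by
  have hline : ∀ s : ℝ, HasDerivAt (fun s : ℝ => B (y + s • (x - y)) (x - y))
      (H (y + s • (x - y)) (x - y) (x - y)) s := fun s => by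
    have hpath : HasDerivAt (fun s : ℝ => y + s • (x - y)) (x - y) s := by
      simpa using ((hasDerivAt_id s).smul_const (x - y)).const_add y
    simpa using ((hB.hasFDerivAt _).comp_hasDerivAt s hpath).clm_apply
      (hasDerivAt_const s (x - y))
  obtain ⟨c, -, hc⟩ := exists_hasDerivAt_eq_slope (fun s : ℝ => B (y + s • (x - y)) (x - y))
    (fun s => H (y + s • (x - y)) (x - y) (x - y)) zero_lt_one
    (fun s _ => (hline s).continuousAt.continuousWithinAt) fun s _ => hline s
  simp only [one_smul, zero_smul, add_zero, add_sub_cancel, sub_zero, div_one] at hc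
  exact (hB.coercive _ _).trans_eq hc

lemma norm_sub_sub_le (hB : IsConvexGradient B H κ C r) {x y : E} (hx : ‖x‖ ≤ r) (hy : ‖y‖ ≤ r) :
    ‖B x - B y - H y (x - y)‖ ≤ C * ‖x - y‖ ^ 2 := by
  have hball : ∀ w ∈ segment ℝ y x, ‖w‖ ≤ r := fun w hw => mem_closedBall_zero_iff.1 <|
    (convex_closedBall (0 : E) r).segment_subset (mem_closedBall_zero_iff.2 hy)
      (mem_closedBall_zero_iff.2 hx) hw
  have hbound := (convex_segment y x).norm_image_sub_le_of_norm_hasFDerivWithin_le'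
    (fun w _ => (hB.hasFDerivAt w).hasFDerivWithinAt)
    (fun w hw => (hB.lipschitz w y (hball w hw) hy).trans
      (mul_le_mul_of_nonneg_left (norm_sub_le_of_mem_segment hw) hB.C_nonneg))
    (left_mem_segment ℝ y x) (right_mem_segment ℝ y x)
  exact hbound.trans_eq (by ring)

lemma norm_hessian_le (hB : IsConvexGradient B H κ C r) {x : E} (hx : ‖x‖ ≤ r) :
    ‖H x‖ ≤ ‖H 0‖ + C * r := by
  have hr : ‖(0 : E)‖ ≤ r := by simpa using (norm_nonneg x).trans hx
  have hlip := hB.lipschitz x 0 hx hr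
  rw [sub_zero] at hlip
  linarith [norm_le_norm_add_norm_sub' (H x) (H 0), mul_le_mul_of_nonneg_left hx hB.C_nonneg]

lemma norm_map_sub_le (hB : IsConvexGradient B H κ C r) {x y : E} (hx : ‖x‖ ≤ r) (hy : ‖y‖ ≤ r) :
    ‖B x - B y‖ ≤ (‖H 0‖ + C * r) * ‖x - y‖ :=
  (convex_closedBall (0 : E) r).norm_image_sub_le_of_norm_hasFDerivWithin_le
    (fun w _ => (hB.hasFDerivAt w).hasFDerivWithinAt)
    (fun _ hw => hB.norm_hessian_le (mem_closedBall_zero_iff.1 hw))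
    (mem_closedBall_zero_iff.2 hy) (mem_closedBall_zero_iff.2 hx)

end IsConvexGradient

end Calculus

section Polarization

variable {E : Type*} [NormedAddCommGroup E] [InnerProductSpace ℝ E]

lemma opNorm_le_of_abs_quadratic_le {S : E →L[ℝ] E →L[ℝ] ℝ} (hS : ∀ v w, S v w = S w v)
    {c : ℝ} (hc : 0 ≤ c) (hquad : ∀ v, |S v v| ≤ c * ‖v‖ ^ 2) : ‖S‖ ≤ c := by
  have hunit : ∀ v w, ‖v‖ = 1 → ‖w‖ = 1 → |S v w| ≤ c := fun v w hv hw => by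
    have hpolar : S v w = (S (v + w) (v + w) - S (v - w) (v - w)) / 4 := by
      simp only [map_add, map_sub, add_apply, sub_apply, hS w v]
      ring
    have hpar := parallelogram_law_with_norm ℝ v w
    rw [hv, hw] at hpar
    rw [hpolar, abs_le]
    constructor <;> nlinarith [abs_le.1 (hquad (v + w)), abs_le.1 (hquad (v - w))]
  refine ContinuousLinearMap.opNorm_le_of_unit_norm hc fun v hv => ?_
  exact ContinuousLinearMap.opNorm_le_of_unit_norm hc fun w hw => hunit v w hv hw

end Polarization

section AbsoluteContinuity

variable {M : Type*} [PseudoMetricSpace M] {a b : ℝ}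

lemma absolutelyContinuousOnInterval_of_dist_le {g : ℝ → M} {φ : ℝ → ℝ} {K : ℝ}
    (hφ : AbsolutelyContinuousOnInterval φ a b)
    (hg : ∀ x ∈ uIcc a b, ∀ y ∈ uIcc a b, dist (g x) (g y) ≤ K * dist (φ x) (φ y)) :
    AbsolutelyContinuousOnInterval g a b := by
  have hlim := Tendsto.const_mul K hφ
  rw [mul_zero] at hlim
  refine squeeze_zero' (Eventually.of_forall fun I => Finset.sum_nonneg fun i _ => dist_nonneg)
    (eventually_inf_principal.2 (Eventually.of_forall fun I hI => ?_)) hlim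
  rw [Finset.mul_sum]
  exact Finset.sum_le_sum fun i hi => hg _ (hI.1 i hi).1 _ (hI.1 i hi).2

lemma absolutelyContinuousOnInterval_contDiff_comp {g φ : ℝ → ℝ} (hg : ContDiff ℝ 1 g)
    (hφ : AbsolutelyContinuousOnInterval φ a b) :
    AbsolutelyContinuousOnInterval (fun s => g (φ s)) a b := by
  obtain ⟨r, hr⟩ := hφ.exists_bound
  obtain ⟨K, hK⟩ := hg.contDiffOn.exists_lipschitzOnWith one_ne_zero
    (convex_closedBall (0 : ℝ) r) (isCompact_closedBall 0 r)
  exact absolutelyContinuousOnInterval_of_dist_le hφ fun x hx y hy =>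
    hK.dist_le_mul _ (mem_closedBall_zero_iff.2 (hr x hx)) _ (mem_closedBall_zero_iff.2 (hr y hy))

lemma le_of_ae_hasDerivAt_nonpos {φ φ' : ℝ → ℝ} (hab : a ≤ b)
    (hφ : AbsolutelyContinuousOnInterval φ a b)
    (hderiv : ∀ᵐ s ∂volume.restrict (Ioo a b), HasDerivAt φ (φ' s) s)
    (hnonpos : ∀ᵐ s ∂volume.restrict (Ioo a b), φ' s ≤ 0) : φ b ≤ φ a := by
  rw [← sub_nonpos, ← hφ.integral_deriv_eq_sub, intervalIntegral.integral_of_le hab,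
    integral_Ioc_eq_integral_Ioo]
  refine integral_nonpos_of_ae ?_
  filter_upwards [hderiv, hnonpos] with s hs hs₀
  exact hs.deriv.trans_le hs₀

lemma ae_hasDerivAt_integral {E : Type*} [NormedAddCommGroup E] [NormedSpace ℝ E]
    [CompleteSpace E] {v : ℝ → E} (hab : a ≤ b) (hv : IntervalIntegrable v volume a b) :
    ∀ᵐ s ∂volume.restrict (Ioo a b), HasDerivAt (fun x => ∫ r in a..x, v r) (v s) s := by
  rw [ae_restrict_iff' measurableSet_Ioo]
  filter_upwards [hv.ae_hasDerivAt_integral] with s hs hsI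
  rw [uIcc_of_le hab] at hs
  exact hs (Ioo_subset_Icc_self hsI) a (left_mem_Icc.2 hab)

theorem le_mul_exp_of_ae_hasDerivAt_le {φ φ' n q : ℝ → ℝ} (hab : a ≤ b)
    (hφ : AbsolutelyContinuousOnInterval φ a b)
    (hn : IntervalIntegrable n volume a b) (hq : IntervalIntegrable q volume a b)
    (hn₀ : ∀ s, 0 ≤ n s) (hq₀ : ∀ s, 0 ≤ q s)
    (hderiv : ∀ᵐ s ∂volume.restrict (Ioo a b), HasDerivAt φ (φ' s) s)
    (hle : ∀ᵐ s ∂volume.restrict (Ioo a b), φ' s ≤ n s * φ s + q s) :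
    φ b ≤ (φ a + ∫ s in a..b, q s) * Real.exp (∫ s in a..b, n s) := by
  set N : ℝ → ℝ := fun x => ∫ s in a..x, n s
  set Q : ℝ → ℝ := fun x => ∫ s in a..x, q s
  have hNa : N a = 0 := intervalIntegral.integral_same
  have hQa : Q a = 0 := intervalIntegral.integral_same
  have hexp : AbsolutelyContinuousOnInterval (fun s => Real.exp (-N s)) a b :=
    absolutelyContinuousOnInterval_contDiff_comp (g := fun x => Real.exp (-x)) (by fun_prop)
      (hn.absolutelyContinuousOnInterval_intervalIntegral left_mem_uIcc)
  have hψ := (hexp.fun_mul hφ).fun_sub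
    (hq.absolutelyContinuousOnInterval_intervalIntegral left_mem_uIcc)
  have hdecay : Real.exp (-N b) * φ b - Q b ≤ Real.exp (-N a) * φ a - Q a := by
    refine le_of_ae_hasDerivAt_nonpos hab hψ (φ' := fun s =>
      Real.exp (-N s) * -n s * φ s + Real.exp (-N s) * φ' s - q s) ?_ ?_
    · filter_upwards [hderiv, ae_hasDerivAt_integral hab hn, ae_hasDerivAt_integral hab hq]
        with s hφs hNs hQs
      exact (hNs.fun_neg.exp.fun_mul hφs).fun_sub hQs
    · filter_upwards [hle, ae_restrict_mem measurableSet_Ioo] with s hs hsI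
      have hNs : 0 ≤ N s := intervalIntegral.integral_nonneg hsI.1.le fun x _ => hn₀ x
      have hexp₁ : Real.exp (-N s) ≤ 1 := Real.exp_le_one_iff.2 (by linarith)
      nlinarith [Real.exp_pos (-N s), mul_le_mul_of_nonneg_left hs (Real.exp_pos (-N s)).le,
        mul_le_of_le_one_left (hq₀ s) hexp₁]
  rw [hNa, hQa, neg_zero, Real.exp_zero, one_mul, sub_zero] at hdecay
  calc φ b = Real.exp (-N b) * φ b * Real.exp (N b) := by
        rw [mul_right_comm, ← Real.exp_add, neg_add_cancel, Real.exp_zero, one_mul]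
    _ ≤ (φ a + Q b) * Real.exp (N b) := by gcongr; linarith

end AbsoluteContinuity

section Primitive

variable {E : Type*} [NormedAddCommGroup E] [NormedSpace ℝ E] {u v : ℝ → E} {z₀ : E} {T : ℝ}

/-- `u` belongs to `W^{1,1}(0,T;E)`, with derivative `v` and initial value `z₀`. -/
structure IsPrimitive (u v : ℝ → E) (z₀ : E) (T : ℝ) : Prop where
  intervalIntegrable : IntervalIntegrable v volume 0 T
  eq_add_integral : ∀ s ∈ Icc 0 T, u s = z₀ + ∫ r in (0 : ℝ)..s, v r

namespace IsPrimitive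

lemma apply_zero (hu : IsPrimitive u v z₀ T) (hT : 0 ≤ T) : u 0 = z₀ := by
  simp [hu.eq_add_integral 0 (left_mem_Icc.2 hT)]

lemma mono (hu : IsPrimitive u v z₀ T) {s : ℝ} (hs : s ∈ Icc 0 T) : IsPrimitive u v z₀ s where
  intervalIntegrable := hu.intervalIntegrable.mono_set <| by
    simpa only [uIcc_of_le hs.1, uIcc_of_le (hs.1.trans hs.2)] using Icc_subset_Icc_right hs.2
  eq_add_integral x hx := hu.eq_add_integral x ⟨hx.1, hx.2.trans hs.2⟩

lemma sub_eq_integral (hu : IsPrimitive u v z₀ T) {a b : ℝ} (ha : a ∈ Icc 0 T)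
    (hb : b ∈ Icc 0 T) : u b - u a = ∫ r in a..b, v r := by
  rw [hu.eq_add_integral a ha, hu.eq_add_integral b hb, add_sub_add_left_eq_sub,
    intervalIntegral.integral_interval_sub_left (hu.mono hb).intervalIntegrable
      (hu.mono ha).intervalIntegrable]

lemma ae_hasDerivAt [CompleteSpace E] (hu : IsPrimitive u v z₀ T) (hT : 0 ≤ T) :
    ∀ᵐ s ∂volume.restrict (Ioo 0 T), HasDerivAt u (v s) s := by
  filter_upwards [ae_hasDerivAt_integral hT hu.intervalIntegrable,
    ae_restrict_mem measurableSet_Ioo] with s hs hsI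
  refine (hs.const_add z₀).congr_of_eventuallyEq ?_
  filter_upwards [isOpen_Ioo.mem_nhds hsI] with x hx
  exact hu.eq_add_integral x (Ioo_subset_Icc_self hx)

lemma norm_sub_le_dist_integral (hu : IsPrimitive u v z₀ T) {n : ℝ → ℝ}
    (hn : IntervalIntegrable n volume 0 T) (hvn : ∀ s, ‖v s‖ ≤ n s) {a b : ℝ} (ha : a ∈ Icc 0 T)
    (hb : b ∈ Icc 0 T) :
    ‖u a - u b‖ ≤ dist (∫ r in (0 : ℝ)..a, n r) (∫ r in (0 : ℝ)..b, n r) := by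
  have hprim : IsPrimitive (fun s => 0 + ∫ r in (0 : ℝ)..s, n r) n 0 T := ⟨hn, fun _ _ => rfl⟩
  wlog hab : a ≤ b generalizing a b
  · rw [norm_sub_rev, dist_comm]
    exact this hb ha (le_of_not_ge hab)
  have hnab := hprim.sub_eq_integral ha hb
  rw [zero_add, zero_add] at hnab
  rw [norm_sub_rev, dist_comm, Real.dist_eq, hnab, hu.sub_eq_integral ha hb]
  refine (intervalIntegral.norm_integral_le_of_norm_le hab (.of_forall fun x _ => hvn x)
    (hn.mono_set ?_)).trans (le_abs_self _)
  rw [uIcc_of_le (ha.1.trans ha.2)]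
  exact uIcc_subset_Icc ha hb

lemma norm_sub_le_mul_abs (hu : IsPrimitive u v z₀ T) {Λ : ℝ} (hv : ∀ s, ‖v s‖ ≤ Λ) {a b : ℝ}
    (ha : a ∈ Icc 0 T) (hb : b ∈ Icc 0 T) : ‖u a - u b‖ ≤ Λ * |a - b| := by
  rw [hu.sub_eq_integral hb ha]
  exact intervalIntegral.norm_integral_le_of_norm_le_const fun x _ => hv x

lemma continuousOn (hu : IsPrimitive u v z₀ T) (hT : 0 ≤ T) : ContinuousOn u (Icc 0 T) := by
  have hint := intervalIntegral.continuousOn_primitive_interval' hu.intervalIntegrable left_mem_uIcc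
  rw [uIcc_of_le hT] at hint
  exact (continuousOn_const.add hint).congr hu.eq_add_integral

lemma exists_norm_le (hu : IsPrimitive u v z₀ T) (hT : 0 ≤ T) :
    ∃ r, ∀ s ∈ Icc 0 T, ‖u s‖ ≤ r :=
  isCompact_Icc.exists_bound_of_continuousOn (hu.continuousOn hT)

end IsPrimitive

end Primitive

section Comparison

variable {E : Type*} [NormedAddCommGroup E] [NormedSpace ℝ E]
  {B : E → E →L[ℝ] ℝ} {H : E → E →L[ℝ] E →L[ℝ] ℝ} {κ C r T : ℝ}
  {u₁ u₂ v₁ v₂ : ℝ → E} {z₀ : E}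

namespace IsConvexGradient

lemma hessian_sub_apply_le (hB : IsConvexGradient B H κ C r) {x y : E} (hx : ‖x‖ ≤ r)
    (hy : ‖y‖ ≤ r) (v w : E) :
    (H x v - H y w) (x - y) ≤ (B x - B y) (v - w) + C * ‖x - y‖ ^ 2 * (‖v‖ + ‖w‖) := by
  have hv : (H x (x - y) - (B x - B y)) v ≤ C * ‖x - y‖ ^ 2 * ‖v‖ := by
    have h := (le_abs_self _).trans
      (ContinuousLinearMap.le_of_opNorm_le _ (hB.norm_sub_sub_le hy hx) v)
    rw [norm_sub_rev, ← neg_sub x y, map_neg, ← neg_sub (B x) (B y), sub_neg_eq_add,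
      neg_add_eq_sub] at h
    exact h
  have hw : ((B x - B y) - H y (x - y)) w ≤ C * ‖x - y‖ ^ 2 * ‖w‖ :=
    (le_abs_self _).trans (ContinuousLinearMap.le_of_opNorm_le _ (hB.norm_sub_sub_le hx hy) w)
  rw [sub_apply] at hv hw
  rw [sub_apply, hB.symm x v, hB.symm y w, map_sub (B x - B y), mul_add]
  linarith

lemma abs_gap_sub_gap_le (hB : IsConvexGradient B H κ C r) {x y x' y' : E} {d : ℝ}
    (hx : ‖x‖ ≤ r) (hy : ‖y‖ ≤ r) (hx' : ‖x'‖ ≤ r) (hy' : ‖y'‖ ≤ r)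
    (hxd : ‖x - x'‖ ≤ d) (hyd : ‖y - y'‖ ≤ d) :
    |(B x - B y) (x - y) - (B x' - B y') (x' - y')| ≤ 8 * (‖H 0‖ + C * r) * r * d := by
  set m := ‖H 0‖ + C * r
  have hm : 0 ≤ m := le_trans (norm_nonneg (H x)) (hB.norm_hessian_le hx)
  have hforce : ‖(B x - B y) - (B x' - B y')‖ ≤ 2 * m * d := by
    rw [sub_sub_sub_comm]
    have h₁ := (hB.norm_map_sub_le hx hx').trans (mul_le_mul_of_nonneg_left hxd hm)
    have h₂ := (hB.norm_map_sub_le hy hy').trans (mul_le_mul_of_nonneg_left hyd hm)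
    linarith [norm_sub_le (B x - B x') (B y - B y')]
  have hstate : ‖(x - y) - (x' - y')‖ ≤ 2 * d := by
    rw [sub_sub_sub_comm]
    linarith [norm_sub_le (x - x') (y - y')]
  have hxy : ‖x - y‖ ≤ 2 * r := by linarith [norm_sub_le x y]
  have hforce' : ‖B x' - B y'‖ ≤ m * (2 * r) :=
    (hB.norm_map_sub_le hx' hy').trans
      (mul_le_mul_of_nonneg_left (by linarith [norm_sub_le x' y']) hm)
  have hsplit : (B x - B y) (x - y) - (B x' - B y') (x' - y') =
      ((B x - B y) - (B x' - B y')) (x - y) + (B x' - B y') ((x - y) - (x' - y')) := by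
    rw [sub_apply _ (B x' - B y'), map_sub (B x' - B y') (x - y)]
    ring
  rw [hsplit, ← Real.norm_eq_abs]
  calc _ ≤ 2 * m * d * (2 * r) + m * (2 * r) * (2 * d) := norm_add_le_of_le
        (ContinuousLinearMap.le_of_opNorm_le_of_le _ hforce hxy)
        (ContinuousLinearMap.le_of_opNorm_le_of_le _ hforce' hstate)
    _ = 8 * m * r * d := by ring

lemma absolutelyContinuousOnInterval_gap (hB : IsConvexGradient B H κ C r) (hT : 0 ≤ T)
    (hu₁ : IsPrimitive u₁ v₁ z₀ T) (hu₂ : IsPrimitive u₂ v₂ z₀ T)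
    (hr₁ : ∀ s ∈ Icc 0 T, ‖u₁ s‖ ≤ r) (hr₂ : ∀ s ∈ Icc 0 T, ‖u₂ s‖ ≤ r) :
    AbsolutelyContinuousOnInterval (fun s => (B (u₁ s) - B (u₂ s)) (u₁ s - u₂ s)) 0 T := by
  have hn : IntervalIntegrable (fun s => ‖v₁ s‖ + ‖v₂ s‖) volume 0 T :=
    hu₁.intervalIntegrable.norm.add hu₂.intervalIntegrable.norm
  refine absolutelyContinuousOnInterval_of_dist_le (K := 8 * (‖H 0‖ + C * r) * r)
    (hn.absolutelyContinuousOnInterval_intervalIntegral left_mem_uIcc) fun x hx y hy => ?_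
  rw [uIcc_of_le hT] at hx hy
  exact hB.abs_gap_sub_gap_le (hr₁ x hx) (hr₂ x hx) (hr₁ y hy) (hr₂ y hy)
    (hu₁.norm_sub_le_dist_integral hn (fun s => le_add_of_nonneg_right (norm_nonneg _)) hx hy)
    (hu₂.norm_sub_le_dist_integral hn (fun s => le_add_of_nonneg_left (norm_nonneg _)) hx hy)

lemma hasDerivAt_gap (hB : IsConvexGradient B H κ C r) {s : ℝ} (h₁ : HasDerivAt u₁ (v₁ s) s)
    (h₂ : HasDerivAt u₂ (v₂ s) s) :
    HasDerivAt (fun s => (B (u₁ s) - B (u₂ s)) (u₁ s - u₂ s))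
      ((H (u₁ s) (v₁ s) - H (u₂ s) (v₂ s)) (u₁ s - u₂ s) +
        (B (u₁ s) - B (u₂ s)) (v₁ s - v₂ s)) s :=
  (((hB.hasFDerivAt _).comp_hasDerivAt s h₁).sub
    ((hB.hasFDerivAt _).comp_hasDerivAt s h₂)).clm_apply (h₁.sub h₂)

theorem mul_norm_sub_sq_le_of_ae [CompleteSpace E] (hB : IsConvexGradient B H κ C r) (hT : 0 ≤ T)
    (hu₁ : IsPrimitive u₁ v₁ z₀ T) (hu₂ : IsPrimitive u₂ v₂ z₀ T)
    (hr₁ : ∀ s ∈ Icc 0 T, ‖u₁ s‖ ≤ r) (hr₂ : ∀ s ∈ Icc 0 T, ‖u₂ s‖ ≤ r)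
    {q : ℝ → ℝ} (hq : IntervalIntegrable q volume 0 T) (hq₀ : ∀ s, 0 ≤ q s)
    (hgap : ∀ᵐ s ∂volume.restrict (Ioo 0 T), (B (u₁ s) - B (u₂ s)) (v₁ s - v₂ s) ≤ q s) :
    κ * ‖u₁ T - u₂ T‖ ^ 2 ≤ 2 * (∫ s in (0 : ℝ)..T, q s) *
      Real.exp (C / κ * ∫ s in (0 : ℝ)..T, (‖v₁ s‖ + ‖v₂ s‖)) := by
  have hκ := hB.κ_pos
  have hC := hB.C_nonneg
  have hgronwall := le_mul_exp_of_ae_hasDerivAt_le hT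
    (hB.absolutelyContinuousOnInterval_gap hT hu₁ hu₂ hr₁ hr₂)
    ((hu₁.intervalIntegrable.norm.add hu₂.intervalIntegrable.norm).const_mul (C / κ))
    (hq.const_mul 2) (fun s => by positivity) (fun s => mul_nonneg zero_le_two (hq₀ s))
    (by filter_upwards [hu₁.ae_hasDerivAt hT, hu₂.ae_hasDerivAt hT] with s h₁ h₂
        exact hB.hasDerivAt_gap h₁ h₂) ?_
  · rw [hu₁.apply_zero hT, hu₂.apply_zero hT, sub_self, sub_self, map_zero, zero_add,
      intervalIntegral.integral_const_mul, intervalIntegral.integral_const_mul] at hgronwall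
    exact (hB.mul_norm_sub_sq_le _ _).trans hgronwall
  · filter_upwards [hgap, ae_restrict_mem measurableSet_Ioo] with s hs hsI
    have hsI' := Ioo_subset_Icc_self hsI
    have hconv : C * ‖u₁ s - u₂ s‖ ^ 2 ≤ C / κ * (B (u₁ s) - B (u₂ s)) (u₁ s - u₂ s) := by
      have h := mul_le_mul_of_nonneg_left (hB.mul_norm_sub_sq_le (u₁ s) (u₂ s))
        (div_nonneg hC hκ.le)
      rwa [← mul_assoc, div_mul_cancel₀ _ hκ.ne'] at h
    have hhess := hB.hessian_sub_apply_le (hr₁ s hsI') (hr₂ s hsI') (v₁ s) (v₂ s)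
    have hv : 0 ≤ ‖v₁ s‖ + ‖v₂ s‖ := by positivity
    nlinarith [mul_le_mul_of_nonneg_right hconv hv]

end IsConvexGradient

end Comparison

section ApproxSolution

variable {E : Type*} [NormedAddCommGroup E] [NormedSpace ℝ E]
  {K : Set (E →L[ℝ] ℝ)}

/-- `v` lies, up to the error `p`, in the normal cone of `K` at the force `g`. For `p = 0` this is
the flow rule of a rate-independent system with elastic domain `K`. -/
def IsApproxNormal (K : Set (E →L[ℝ] ℝ)) (p : ℝ) (g : E →L[ℝ] ℝ) (v : E) : Prop :=
  ∃ σ ∈ K, ‖σ - g‖ ≤ p ∧ ∀ η ∈ K, η v ≤ σ v + p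

lemma isApproxNormal_zero_iff {g : E →L[ℝ] ℝ} {v : E} :
    IsApproxNormal K 0 g v ↔ g ∈ K ∧ ∀ η ∈ K, η v ≤ g v := by
  refine ⟨?_, fun ⟨hg, hv⟩ => ⟨g, hg, by simp, by simpa using hv⟩⟩
  rintro ⟨σ, hσ, hσg, hv⟩
  rw [norm_le_zero_iff, sub_eq_zero] at hσg
  exact ⟨hσg ▸ hσ, by simpa [hσg] using hv⟩

namespace IsApproxNormal

variable {p₁ p₂ : ℝ} {g₁ g₂ : E →L[ℝ] ℝ} {v₁ v₂ : E}

lemma apply_le (h : IsApproxNormal K p₁ g₁ v₁) {η : E →L[ℝ] ℝ} (hη : η ∈ K) :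
    η v₁ ≤ g₁ v₁ + p₁ * (1 + ‖v₁‖) := by
  obtain ⟨σ, -, hσg, hσ⟩ := h
  have herr := (le_abs_self _).trans (ContinuousLinearMap.le_of_opNorm_le _ hσg v₁)
  rw [sub_apply] at herr
  linarith [hσ η hη]

lemma sub_apply_sub_le (h₁ : IsApproxNormal K p₁ g₁ v₁) (h₂ : IsApproxNormal K p₂ g₂ v₂) :
    (g₂ - g₁) (v₁ - v₂) ≤ (p₁ + p₂) * (1 + ‖v₁‖ + ‖v₂‖) := by
  have cross : ∀ {p q : ℝ} {g g' : E →L[ℝ] ℝ} {v w : E}, IsApproxNormal K p g v →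
      IsApproxNormal K q g' w → (g' - g) v ≤ p * (1 + ‖v‖) + q * ‖v‖ := by
    rintro p q g g' v w hv ⟨σ, hσ, hσg, -⟩
    have herr := (neg_le_abs _).trans (ContinuousLinearMap.le_of_opNorm_le _ hσg v)
    rw [sub_apply] at herr ⊢
    linarith [hv.apply_le hσ]
  have h₁₂ := cross h₁ h₂
  have h₂₁ := cross h₂ h₁
  simp only [sub_apply, map_sub] at h₁₂ h₂₁ ⊢
  linarith

end IsApproxNormal

/-- `u` solves, up to the residual `p`, the sweeping process driven by `f - B`: almost everywhere
its velocity `v` is approximately normal to `K` at the force `f - B u`. The differential solutions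
are those with `p = 0`. -/
structure IsApproxSolution (B : E → E →L[ℝ] ℝ) (f : ℝ → E →L[ℝ] ℝ) (K : Set (E →L[ℝ] ℝ))
    (p : ℝ → ℝ) (T : ℝ) (z₀ : E) (u v : ℝ → E) : Prop where
  isPrimitive : IsPrimitive u v z₀ T
  flow : ∀ᵐ s ∂volume.restrict (Ioo 0 T), IsApproxNormal K (p s) (f s - B (u s)) (v s)

namespace IsApproxSolution

variable {B : E → E →L[ℝ] ℝ} {H : E → E →L[ℝ] E →L[ℝ] ℝ} {f : ℝ → E →L[ℝ] ℝ} {κ T : ℝ}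
  {p₁ p₂ : ℝ → ℝ} {z₀ : E} {u₁ u₂ v₁ v₂ : ℝ → E}

lemma mono (h : IsApproxSolution B f K p₁ T z₀ u₁ v₁) {s : ℝ} (hs : s ∈ Icc 0 T) :
    IsApproxSolution B f K p₁ s z₀ u₁ v₁ where
  isPrimitive := h.isPrimitive.mono hs
  flow := ae_restrict_of_ae_restrict_of_subset (Ioo_subset_Ioo_right hs.2) h.flow

lemma ae_gap_le (h₁ : IsApproxSolution B f K p₁ T z₀ u₁ v₁)
    (h₂ : IsApproxSolution B f K p₂ T z₀ u₂ v₂) :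
    ∀ᵐ s ∂volume.restrict (Ioo 0 T), (B (u₁ s) - B (u₂ s)) (v₁ s - v₂ s) ≤
      (p₁ s + p₂ s) * (1 + ‖v₁ s‖ + ‖v₂ s‖) := by
  filter_upwards [h₁.flow, h₂.flow] with s hs₁ hs₂
  simpa only [sub_sub_sub_cancel_left] using hs₁.sub_apply_sub_le hs₂

theorem eqOn [CompleteSpace E] (hB : ∀ r, 0 < r → ∃ C, IsConvexGradient B H κ C r)
    (h₁ : IsApproxSolution B f K 0 T z₀ u₁ v₁) (h₂ : IsApproxSolution B f K 0 T z₀ u₂ v₂) :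
    EqOn u₁ u₂ (Icc 0 T) := fun s hs => by
  obtain ⟨r₁, hr₁⟩ := (h₁.mono hs).isPrimitive.exists_norm_le hs.1
  obtain ⟨r₂, hr₂⟩ := (h₂.mono hs).isPrimitive.exists_norm_le hs.1
  obtain ⟨C, hBr⟩ := hB (|r₁| + |r₂| + 1) (by positivity)
  have hsq := hBr.mul_norm_sub_sq_le_of_ae hs.1 (h₁.mono hs).isPrimitive (h₂.mono hs).isPrimitive
    (fun x hx => by linarith [hr₁ x hx, le_abs_self r₁, abs_nonneg r₂])
    (fun x hx => by linarith [hr₂ x hx, le_abs_self r₂, abs_nonneg r₁])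
    (q := 0) intervalIntegrable_const (fun _ => le_rfl)
    (by simpa using (h₁.mono hs).ae_gap_le (h₂.mono hs))
  simp only [Pi.zero_apply, intervalIntegral.integral_zero, mul_zero, zero_mul] at hsq
  have hzero : ‖u₁ s - u₂ s‖ ^ 2 ≤ 0 := nonpos_of_mul_nonpos_right hsq hBr.κ_pos
  exact sub_eq_zero.1 (norm_eq_zero.1 (pow_eq_zero_iff two_ne_zero |>.1
    (le_antisymm hzero (sq_nonneg _))))

end IsApproxSolution

/-- An approximate solution `u` with step size `τ`: it is `Λ`-Lipschitz, and its residual `p` is of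
first order in `τ` pointwise but of second order in mean, uniformly with the constant `c`. -/
structure IsSecondOrderApprox (B : E → E →L[ℝ] ℝ) (f : ℝ → E →L[ℝ] ℝ) (K : Set (E →L[ℝ] ℝ))
    (Λ c τ : ℝ) (p : ℝ → ℝ) (T : ℝ) (z₀ : E) (u v : ℝ → E) : Prop extends
    IsApproxSolution B f K p T z₀ u v where
  norm_le : ∀ s, ‖v s‖ ≤ Λ
  residual_nonneg : ∀ s, 0 ≤ p s
  residual_le : ∀ s, p s ≤ c * τ
  residual_intervalIntegrable : IntervalIntegrable p volume 0 T
  integral_residual_le : ∫ s in (0 : ℝ)..T, p s ≤ c * τ ^ 2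

namespace IsSecondOrderApprox

variable {B : E → E →L[ℝ] ℝ} {H : E → E →L[ℝ] E →L[ℝ] ℝ} {f : ℝ → E →L[ℝ] ℝ}
  {κ C Λ c τ τ₁ τ₂ r T : ℝ} {p p₁ p₂ : ℝ → ℝ} {z₀ : E} {u v u₁ u₂ v₁ v₂ : ℝ → E}

lemma mono (h : IsSecondOrderApprox B f K Λ c τ p T z₀ u v) {s : ℝ} (hs : s ∈ Icc 0 T) :
    IsSecondOrderApprox B f K Λ c τ p s z₀ u v where
  toIsApproxSolution := h.toIsApproxSolution.mono hs
  norm_le := h.norm_le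
  residual_nonneg := h.residual_nonneg
  residual_le := h.residual_le
  residual_intervalIntegrable := h.residual_intervalIntegrable.mono_set <| by
    simpa only [uIcc_of_le hs.1, uIcc_of_le (hs.1.trans hs.2)] using Icc_subset_Icc_right hs.2
  integral_residual_le := (intervalIntegral.integral_mono_interval le_rfl hs.1 hs.2
    (.of_forall h.residual_nonneg) h.residual_intervalIntegrable).trans h.integral_residual_le

lemma norm_apply_le (h : IsSecondOrderApprox B f K Λ c τ p T z₀ u v) {s : ℝ} (hs : s ∈ Icc 0 T) :
    ‖u s‖ ≤ ‖z₀‖ + Λ * T := by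
  have hΛ : 0 ≤ Λ := (norm_nonneg _).trans (h.norm_le 0)
  have hT := hs.1.trans hs.2
  have hlip := h.isPrimitive.norm_sub_le_mul_abs h.norm_le hs (left_mem_Icc.2 hT)
  rw [h.isPrimitive.apply_zero hT, sub_zero, abs_of_nonneg hs.1] at hlip
  linarith [norm_le_norm_add_norm_sub' (u s) z₀, mul_le_mul_of_nonneg_left hs.2 hΛ]

lemma mul_norm_sub_sq_le [CompleteSpace E] (hT : 0 ≤ T)
    (hB : IsConvexGradient B H κ C r) (hr : ‖z₀‖ + Λ * T ≤ r)
    (h₁ : IsSecondOrderApprox B f K Λ c τ₁ p₁ T z₀ u₁ v₁)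
    (h₂ : IsSecondOrderApprox B f K Λ c τ₂ p₂ T z₀ u₂ v₂) :
    κ * ‖u₁ T - u₂ T‖ ^ 2 ≤
      2 * ((1 + 2 * Λ) * (c * (τ₁ ^ 2 + τ₂ ^ 2))) * Real.exp (C / κ * (2 * Λ * T)) := by
  have hΛ : 0 ≤ Λ := (norm_nonneg _).trans (h₁.norm_le 0)
  have hκ := hB.κ_pos
  have hC := hB.C_nonneg
  have hq₀ : ∀ x, 0 ≤ (1 + 2 * Λ) * (p₁ x + p₂ x) := fun x =>
    mul_nonneg (by linarith) (add_nonneg (h₁.residual_nonneg x) (h₂.residual_nonneg x))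
  have hspeed : ∫ x in (0 : ℝ)..T, (‖v₁ x‖ + ‖v₂ x‖) ≤ 2 * Λ * T := by
    have hconst := intervalIntegral.norm_integral_le_of_norm_le_const (a := 0) (b := T)
      (C := 2 * Λ) (f := fun x => ‖v₁ x‖ + ‖v₂ x‖) fun x _ => by
        rw [Real.norm_of_nonneg (by positivity)]
        linarith [h₁.norm_le x, h₂.norm_le x]
    rw [sub_zero, abs_of_nonneg hT] at hconst
    exact (le_abs_self _).trans hconst
  have hresidual : ∫ x in (0 : ℝ)..T, (1 + 2 * Λ) * (p₁ x + p₂ x) ≤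
      (1 + 2 * Λ) * (c * (τ₁ ^ 2 + τ₂ ^ 2)) := by
    rw [intervalIntegral.integral_const_mul, intervalIntegral.integral_add
      h₁.residual_intervalIntegrable h₂.residual_intervalIntegrable]
    gcongr
    linarith [h₁.integral_residual_le, h₂.integral_residual_le]
  have hresidual₀ := hresidual.trans' (intervalIntegral.integral_nonneg hT fun x _ => hq₀ x)
  refine (hB.mul_norm_sub_sq_le_of_ae hT h₁.isPrimitive h₂.isPrimitive
    (fun _ hs => (h₁.norm_apply_le hs).trans hr) (fun _ hs => (h₂.norm_apply_le hs).trans hr)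
    ((h₁.residual_intervalIntegrable.add h₂.residual_intervalIntegrable).const_mul (1 + 2 * Λ))
    hq₀ ?_).trans (by gcongr)
  filter_upwards [h₁.ae_gap_le h₂.toIsApproxSolution] with x hx
  rw [mul_comm (1 + 2 * Λ)]
  refine hx.trans (mul_le_mul_of_nonneg_left ?_
    (add_nonneg (h₁.residual_nonneg x) (h₂.residual_nonneg x)))
  linarith [h₁.norm_le x, h₂.norm_le x]

end IsSecondOrderApprox

end ApproxSolution

section WeakLimit

variable {E : Type*} [NormedAddCommGroup E] [InnerProductSpace ℝ E] [CompleteSpace E]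

lemma exists_forall_inner_eq_of_tendsto {x : ℕ → E} {b : ℝ} (hx : ∀ n, ‖x n‖ ≤ b) :
    ∃ x₀ : E, ∀ ζ l, Tendsto (fun n => ⟪ζ, x n⟫) atTop (𝓝 l) → ⟪ζ, x₀⟫ = l := by
  let g : ℕ → WeakDual ℝ E := fun n =>
    StrongDual.toWeakDual (InnerProductSpace.toDual ℝ E (x n))
  have hcompact := WeakDual.isCompact_closedBall (0 : StrongDual ℝ E) b
  obtain ⟨φ, -, hφ⟩ := hcompact.ultrafilter_le_nhds ((hyperfilter ℕ).map g)
    (tendsto_principal.2 (Eventually.of_forall fun n => by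
      simpa [g] using hx n))
  refine ⟨(InnerProductSpace.toDual ℝ E).symm (WeakDual.toStrongDual φ), fun ζ l hl => ?_⟩
  have hcluster : Tendsto (fun n => g n ζ) (hyperfilter ℕ) (𝓝 (φ ζ)) :=
    ((WeakDual.eval_continuous ζ).tendsto φ).comp hφ
  rw [real_inner_comm, InnerProductSpace.toDual_symm_apply]
  refine tendsto_nhds_unique hcluster ((hl.mono_left Nat.hyperfilter_le_atTop).congr fun n => ?_)
  exact real_inner_comm _ _

lemma exists_isPrimitive_of_tendsto {u v : ℕ → ℝ → E} {y : ℝ → E} {z₀ : E} {Λ T : ℝ}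
    (hu : ∀ n, IsPrimitive (u n) (v n) z₀ T) (hv : ∀ n s, ‖v n s‖ ≤ Λ)
    (hy : ∀ s ∈ Icc 0 T, Tendsto (fun n => u n s) atTop (𝓝 (y s))) :
    ∃ v₀, IsPrimitive y v₀ z₀ T := by
  rcases lt_or_ge T 0 with hT | hT
  · exact ⟨0, intervalIntegrable_const, by simp [Icc_eq_empty (not_le.2 hT)]⟩
  set μ : Measure ℝ := volume.restrict (Ioc 0 T)
  have hmem : ∀ n, MemLp (v n) 2 μ := fun n => MemLp.of_bound
    ((intervalIntegrable_iff_integrableOn_Ioc_of_le hT).1 (hu n).intervalIntegrable).1 Λ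
    (Eventually.of_forall (hv n))
  obtain ⟨x₀, hx₀⟩ := exists_forall_inner_eq_of_tendsto (x := fun n => (hmem n).toLp (v n))
    fun n => Lp.norm_le_of_ae_bound ((norm_nonneg _).trans (hv 0 0)) <| by
      filter_upwards [(hmem n).coeFn_toLp] with t ht
      exact ht.symm ▸ hv n t
  have hint : IntervalIntegrable x₀ volume 0 T :=
    (intervalIntegrable_iff_integrableOn_Ioc_of_le hT).2 ((Lp.memLp x₀).integrable one_le_two)
  refine ⟨x₀, hint, fun s hs => ?_⟩
  have htest : ∀ (ζ : E) (w : Lp E 2 μ),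
      ⟪indicatorConstLp 2 measurableSet_Ioc (measure_ne_top μ (Ioc 0 s)) ζ, w⟫ =
        ⟪ζ, ∫ r in (0 : ℝ)..s, w r⟫ := fun ζ w => by
    rw [L2.inner_indicatorConstLp_eq_inner_setIntegral, intervalIntegral.integral_of_le hs.1,
      Measure.restrict_restrict_of_subset (Ioc_subset_Ioc_right hs.2)]
  rw [← sub_eq_iff_eq_add']
  refine ext_inner_left ℝ fun ζ => ?_
  rw [← htest]
  refine (hx₀ _ _ (Tendsto.congr (fun n => ?_)
    (tendsto_const_nhds.inner ((hy s hs).sub_const z₀)))).symm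
  rw [htest, (hu n).eq_add_integral s hs, add_sub_cancel_left,
    intervalIntegral.integral_of_le hs.1, intervalIntegral.integral_of_le hs.1]
  congr 1
  refine integral_congr_ae (ae_restrict_of_ae_restrict_of_subset (Ioc_subset_Ioc_right hs.2) ?_)
  exact (hmem n).coeFn_toLp.symm

end WeakLimit

section Limit

variable {E : Type*} [NormedAddCommGroup E]

namespace IsSecondOrderApprox

section Normed

variable [NormedSpace ℝ E] {B : E → E →L[ℝ] ℝ} {H : E → E →L[ℝ] E →L[ℝ] ℝ} {f : ℝ → E →L[ℝ] ℝ}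
  {K : Set (E →L[ℝ] ℝ)} {κ C L Λ c r T τ : ℝ} {p : ℝ → ℝ} {z₀ : E} {u v : ℝ → E}

lemma exists_norm_sub_le [CompleteSpace E] (hB : IsConvexGradient B H κ C r)
    (hr : ‖z₀‖ + Λ * T ≤ r) (f : ℝ → E →L[ℝ] ℝ) (K : Set (E →L[ℝ] ℝ)) (c : ℝ) :
    ∃ M, 0 ≤ M ∧ ∀ {τ₁ τ₂ : ℝ} {p₁ p₂ : ℝ → ℝ} {u₁ v₁ u₂ v₂ : ℝ → E}, 0 < τ₁ → 0 < τ₂ →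
      IsSecondOrderApprox B f K Λ c τ₁ p₁ T z₀ u₁ v₁ →
      IsSecondOrderApprox B f K Λ c τ₂ p₂ T z₀ u₂ v₂ →
      ∀ s ∈ Icc 0 T, ‖u₁ s - u₂ s‖ ≤ M * (τ₁ + τ₂) := by
  have hκ := hB.κ_pos
  have hC := hB.C_nonneg
  set P := 2 * ((1 + 2 * Λ) * c) * Real.exp (C / κ * (2 * Λ * T)) / κ
  refine ⟨√P, Real.sqrt_nonneg P, fun {τ₁ τ₂ p₁ p₂ u₁ v₁ u₂ v₂} hτ₁ hτ₂ h₁ h₂ s hs => ?_⟩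
  have hΛ : 0 ≤ Λ := (norm_nonneg _).trans (h₁.norm_le 0)
  have hc : 0 ≤ c := by
    have := (h₁.residual_nonneg 0).trans (h₁.residual_le 0)
    exact nonneg_of_mul_nonneg_left this hτ₁
  have hP : 0 ≤ P := by positivity
  have hradius : ‖z₀‖ + Λ * s ≤ r := by linarith [mul_le_mul_of_nonneg_left hs.2 hΛ]
  have hsq : κ * ‖u₁ s - u₂ s‖ ^ 2 ≤ κ * (P * (τ₁ ^ 2 + τ₂ ^ 2)) :=
    calc _ ≤ 2 * ((1 + 2 * Λ) * (c * (τ₁ ^ 2 + τ₂ ^ 2))) * Real.exp (C / κ * (2 * Λ * s)) :=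
          mul_norm_sub_sq_le hs.1 hB hradius (h₁.mono hs) (h₂.mono hs)
      _ ≤ 2 * ((1 + 2 * Λ) * (c * (τ₁ ^ 2 + τ₂ ^ 2))) * Real.exp (C / κ * (2 * Λ * T)) := by
          gcongr
          exact hs.2
      _ = κ * (P * (τ₁ ^ 2 + τ₂ ^ 2)) := by
          simp only [P]
          field_simp
  refine le_of_sq_le_sq ?_ (by positivity)
  rw [mul_pow, Real.sq_sqrt hP]
  refine (le_of_mul_le_mul_left hsq hκ).trans (mul_le_mul_of_nonneg_left ?_ hP)
  nlinarith [mul_pos hτ₁ hτ₂]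

lemma apply_sub_le [CompleteSpace E] (h : IsSecondOrderApprox B f K Λ c τ p T z₀ u v)
    {η g : E →L[ℝ] ℝ} (hη : η ∈ K) {a b e : ℝ} (ha : 0 ≤ a) (hab : a ≤ b) (hb : b ≤ T)
    (he : ∀ s ∈ Icc a b, ‖f s - B (u s) - g‖ ≤ e) :
    (η - g) (u b - u a) ≤ (e * Λ + c * τ * (1 + Λ)) * (b - a) := by
  have hv : IntervalIntegrable v volume a b := h.isPrimitive.intervalIntegrable.mono_set <| by
    simpa only [uIcc_of_le hab, uIcc_of_le (ha.trans (hab.trans hb))] using Icc_subset_Icc ha hb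
  rw [h.isPrimitive.sub_eq_integral ⟨ha, hab.trans hb⟩ ⟨ha.trans hab, hb⟩,
    ← ContinuousLinearMap.intervalIntegral_comp_comm _ hv]
  have hbound : ∀ᵐ s ∂volume.restrict (Ioo a b),
      (η - g) (v s) ≤ e * Λ + c * τ * (1 + Λ) := by
    filter_upwards [ae_restrict_of_ae_restrict_of_subset (Ioo_subset_Ioo ha hb) h.flow,
      ae_restrict_mem measurableSet_Ioo] with s hflow hs
    have hg := (le_abs_self _).trans (ContinuousLinearMap.le_of_opNorm_le_of_le _
      (he s (Ioo_subset_Icc_self hs)) (h.norm_le s))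
    have hp : p s * (1 + ‖v s‖) ≤ c * τ * (1 + Λ) :=
      mul_le_mul (h.residual_le s) (by linarith [h.norm_le s]) (by positivity)
        ((h.residual_nonneg s).trans (h.residual_le s))
    rw [sub_apply] at hg ⊢
    linarith [hflow.apply_le hη]
  rw [Measure.restrict_congr_set Ioo_ae_eq_Icc] at hbound
  refine (intervalIntegral.integral_mono_ae_restrict hab
    ⟨(η - g).integrable_comp hv.1, (η - g).integrable_comp hv.2⟩ intervalIntegrable_const
    hbound).trans_eq ?_
  rw [intervalIntegral.integral_const, smul_eq_mul, mul_comm]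

lemma norm_force_sub_le (h : IsSecondOrderApprox B f K Λ c τ p T z₀ u v)
    (hB : IsConvexGradient B H κ C r) (hr : ‖z₀‖ + Λ * T ≤ r)
    (hf : ∀ x ∈ Icc 0 T, ∀ y ∈ Icc 0 T, ‖f x - f y‖ ≤ L * |x - y|) {s t d : ℝ} {x : E}
    (hs : s ∈ Icc 0 T) (ht : t ∈ Icc 0 T) (hx : ‖x‖ ≤ r) (hd : ‖u t - x‖ ≤ d) :
    ‖f s - B (u s) - (f t - B x)‖ ≤
      (L + (‖H 0‖ + C * r) * Λ) * |s - t| + (‖H 0‖ + C * r) * d := by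
  have hm : 0 ≤ ‖H 0‖ + C * r := (norm_nonneg (H x)).trans (hB.norm_hessian_le hx)
  have hu : ‖u s - x‖ ≤ Λ * |s - t| + d :=
    (norm_sub_le_norm_sub_add_norm_sub _ (u t) _).trans
      (add_le_add (h.isPrimitive.norm_sub_le_mul_abs h.norm_le hs ht) hd)
  have hBu := (hB.norm_map_sub_le ((h.norm_apply_le hs).trans hr) hx).trans
    (mul_le_mul_of_nonneg_left hu hm)
  rw [sub_sub_sub_comm]
  linarith [norm_sub_le (f s - f t) (B (u s) - B x), hf s hs t ht]

end Normed

end IsSecondOrderApprox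

lemma apply_deriv_nonpos_of_le_sq [NormedSpace ℝ E] {φ : E →L[ℝ] ℝ} {y : ℝ → E} {y' : E} {t T A : ℝ}
    (hy : HasDerivAt y y' t) (htT : t < T)
    (hle : ∀ x ∈ Icc t T, φ (y x - y t) ≤ A * (x - t) ^ 2) : φ y' ≤ 0 := by
  have hderiv : HasDerivAt (fun x => φ (y x - y t) - A * (x - t) ^ 2) (φ y') t := by
    simpa using (φ.hasFDerivAt.comp_hasDerivAt t (hy.sub_const (y t))).fun_sub
      ((((hasDerivAt_id t).sub_const t).fun_pow 2).const_mul A)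
  refine le_of_tendsto (hasDerivWithinAt_iff_tendsto_slope' self_notMem_Ioi |>.1
    (hderiv.hasDerivWithinAt (s := Ioi t))) ?_
  filter_upwards [Ioc_mem_nhdsGT htT] with x hx
  rw [slope_def_field]
  refine div_nonpos_of_nonpos_of_nonneg ?_ (sub_nonneg.2 hx.1.le)
  simpa using hle x (Ioc_subset_Icc_self hx)

section Normed

variable [NormedSpace ℝ E] {B : E → E →L[ℝ] ℝ} {H : E → E →L[ℝ] E →L[ℝ] ℝ} {f : ℝ → E →L[ℝ] ℝ}
  {K : Set (E →L[ℝ] ℝ)} {κ C L Λ c r M T : ℝ} {z₀ : E} {τ : ℕ → ℝ} {p : ℕ → ℝ → ℝ}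
  {u v : ℕ → ℝ → E} {y : ℝ → E}

lemma force_mem_of_tendsto (hK : IsClosed K) (hB : IsConvexGradient B H κ C r)
    (hr : ‖z₀‖ + Λ * T ≤ r) (hf : ∀ x ∈ Icc 0 T, ∀ y ∈ Icc 0 T, ‖f x - f y‖ ≤ L * |x - y|)
    (h : ∀ n, IsSecondOrderApprox B f K Λ c (τ n) (p n) T z₀ (u n) (v n))
    (hτ : Tendsto τ atTop (𝓝 0)) {t : ℝ} (ht : t ∈ Icc 0 T) {x : E} (hx : ‖x‖ ≤ r)
    (hux : ∀ n, ‖u n t - x‖ ≤ M * τ n)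
    (hflow : ∀ n, IsApproxNormal K (p n t) (f t - B (u n t)) (v n t)) : f t - B x ∈ K := by
  choose σ hσK hσ _ using hflow
  refine hK.mem_of_tendsto (f := σ) (b := atTop) (tendsto_iff_norm_sub_tendsto_zero.2
    (squeeze_zero (fun _ => norm_nonneg _)
      (g := fun n => c * τ n + (‖H 0‖ + C * r) * (M * τ n)) (fun n => ?_) ?_)) (.of_forall hσK)
  · have hforce := (h n).norm_force_sub_le hB hr hf ht ht hx (hux n)
    rw [sub_self, abs_zero, mul_zero, zero_add] at hforce
    exact (norm_sub_le_norm_sub_add_norm_sub _ _ _).trans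
      (add_le_add ((hσ n).trans ((h n).residual_le t)) hforce)
  · simpa using (hτ.const_mul c).add ((hτ.const_mul M).const_mul (‖H 0‖ + C * r))

lemma apply_sub_le_of_tendsto [CompleteSpace E] (hB : IsConvexGradient B H κ C r)
    (hr : ‖z₀‖ + Λ * T ≤ r) (hf : ∀ x ∈ Icc 0 T, ∀ y ∈ Icc 0 T, ‖f x - f y‖ ≤ L * |x - y|)
    (h : ∀ n, IsSecondOrderApprox B f K Λ c (τ n) (p n) T z₀ (u n) (v n))
    (hτ : Tendsto τ atTop (𝓝 0)) (hy : ∀ n, ∀ s ∈ Icc 0 T, ‖u n s - y s‖ ≤ M * τ n)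
    (hL : 0 ≤ L) {t x : ℝ} (ht : t ∈ Icc 0 T) (hyt : ‖y t‖ ≤ r) (hx : x ∈ Icc t T)
    {η : E →L[ℝ] ℝ} (hη : η ∈ K) :
    (η - (f t - B (y t))) (y x - y t) ≤
      (L + (‖H 0‖ + C * r) * Λ) * Λ * (x - t) ^ 2 := by
  have hΛ : 0 ≤ Λ := (norm_nonneg _).trans ((h 0).norm_le 0)
  set m := ‖H 0‖ + C * r
  have hm : 0 ≤ m := (norm_nonneg (H (y t))).trans (hB.norm_hessian_le hyt)
  have hlim : ∀ s ∈ Icc 0 T, Tendsto (fun n => u n s) atTop (𝓝 (y s)) := fun s hs =>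
    tendsto_iff_norm_sub_tendsto_zero.2 (squeeze_zero (fun _ => norm_nonneg _) (hy · s hs)
      (by simpa using hτ.const_mul M))
  have hbound : ∀ n, (η - (f t - B (y t))) (u n x - u n t) ≤
      (((L + m * Λ) * (x - t) + m * (M * τ n)) * Λ + c * τ n * (1 + Λ)) * (x - t) := fun n =>
    (h n).apply_sub_le hη ht.1 hx.1 hx.2 fun s hs =>
      ((h n).norm_force_sub_le hB hr hf ⟨ht.1.trans hs.1, hs.2.trans hx.2⟩ ht hyt
        (hy n t ht)).trans <| by
        rw [abs_of_nonneg (sub_nonneg.2 hs.1)]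
        gcongr
        exact hs.2
  have hrhs := (((((hτ.const_mul M).const_mul m).const_add ((L + m * Λ) * (x - t))).mul_const
    Λ).add ((hτ.const_mul c).mul_const (1 + Λ))).mul_const (x - t)
  refine (le_of_tendsto_of_tendsto' (((η - (f t - B (y t))).continuous.tendsto _).comp
    ((hlim x ⟨ht.1.trans hx.1, hx.2⟩).sub (hlim t ht))) hrhs hbound).trans_eq ?_
  ring

end Normed

section Hilbert

variable [InnerProductSpace ℝ E] [CompleteSpace E] {B : E → E →L[ℝ] ℝ}
  {H : E → E →L[ℝ] E →L[ℝ] ℝ} {f : ℝ → E →L[ℝ] ℝ} {K : Set (E →L[ℝ] ℝ)}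
  {κ C L Λ c r M T : ℝ} {z₀ : E} {τ : ℕ → ℝ} {p : ℕ → ℝ → ℝ} {u v : ℕ → ℝ → E} {y : ℝ → E}

theorem exists_isApproxSolution_zero_of_tendsto (hK : IsClosed K)
    (hB : IsConvexGradient B H κ C r) (hr : ‖z₀‖ + Λ * T ≤ r)
    (hf : ∀ x ∈ Icc 0 T, ∀ y ∈ Icc 0 T, ‖f x - f y‖ ≤ L * |x - y|) (hT : 0 ≤ T) (hL : 0 ≤ L)
    (h : ∀ n, IsSecondOrderApprox B f K Λ c (τ n) (p n) T z₀ (u n) (v n))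
    (hτ : Tendsto τ atTop (𝓝 0)) (hy : ∀ n, ∀ s ∈ Icc 0 T, ‖u n s - y s‖ ≤ M * τ n) :
    ∃ w, IsApproxSolution B f K 0 T z₀ y w := by
  have hlim : ∀ s ∈ Icc 0 T, Tendsto (fun n => u n s) atTop (𝓝 (y s)) := fun s hs =>
    tendsto_iff_norm_sub_tendsto_zero.2 (squeeze_zero (fun _ => norm_nonneg _) (hy · s hs)
      (by simpa using hτ.const_mul M))
  have hyr : ∀ s ∈ Icc 0 T, ‖y s‖ ≤ r := fun s hs =>
    le_of_tendsto' (hlim s hs).norm fun n => ((h n).norm_apply_le hs).trans hr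
  obtain ⟨w, hw⟩ := exists_isPrimitive_of_tendsto (fun n => (h n).isPrimitive)
    (fun n => (h n).norm_le) hlim
  refine ⟨w, hw, ?_⟩
  filter_upwards [hw.ae_hasDerivAt hT, ae_all_iff.2 fun n => (h n).flow,
    ae_restrict_mem measurableSet_Ioo] with t hderiv hflow ht
  have htI := Ioo_subset_Icc_self ht
  refine isApproxNormal_zero_iff.2 ⟨force_mem_of_tendsto hK hB hr hf h hτ htI (hyr t htI)
    (hy · t htI) hflow, fun η hη => ?_⟩
  rw [← sub_nonpos, ← sub_apply]
  exact apply_deriv_nonpos_of_le_sq hderiv ht.2 fun x hx =>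
    apply_sub_le_of_tendsto hB hr hf h hτ hy hL htI (hyr t htI) hx hη

theorem exists_isApproxSolution_zero_norm_sub_le (hK : IsClosed K)
    (hB : IsConvexGradient B H κ C r) (hr : ‖z₀‖ + Λ * T ≤ r)
    (hf : ∀ x ∈ Icc 0 T, ∀ y ∈ Icc 0 T, ‖f x - f y‖ ≤ L * |x - y|) (hT : 0 ≤ T) (hL : 0 ≤ L)
    {p : ℝ → ℝ → ℝ} {u v : ℝ → ℝ → E}
    (h : ∀ τ, 0 < τ → IsSecondOrderApprox B f K Λ c τ (p τ) T z₀ (u τ) (v τ)) :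
    ∃ y w, IsApproxSolution B f K 0 T z₀ y w ∧
      ∃ M, 0 ≤ M ∧ ∀ τ, 0 < τ → ∀ s ∈ Icc 0 T, ‖u τ s - y s‖ ≤ M * τ := by
  obtain ⟨M, hM, hcauchy⟩ := IsSecondOrderApprox.exists_norm_sub_le hB hr f K c
  have hpos : ∀ n : ℕ, 0 < 1 / ((n : ℝ) + 1) := fun n => by positivity
  have hstep := tendsto_one_div_add_atTop_nhds_zero_nat (𝕜 := ℝ)
  have hex : ∀ s ∈ Icc 0 T, ∃ l, Tendsto (fun n : ℕ => u (1 / ((n : ℝ) + 1)) s) atTop (𝓝 l) :=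
    fun s hs => cauchySeq_tendsto_of_complete <| cauchySeq_of_le_tendsto_0
      (fun n : ℕ => M * (1 / ((n : ℝ) + 1) + 1 / ((n : ℝ) + 1)))
      (fun n m k hn hm => by
        rw [dist_eq_norm]
        refine (hcauchy (hpos n) (hpos m) (h _ (hpos n)) (h _ (hpos m)) s hs).trans ?_
        gcongr)
      (by simpa using (hstep.add hstep).const_mul M)
  choose! y hy using hex
  have hyτ : ∀ τ, 0 < τ → ∀ s ∈ Icc 0 T, ‖u τ s - y s‖ ≤ M * τ := fun τ hτ s hs =>
    le_of_tendsto_of_tendsto' ((hy s hs).const_sub (u τ s)).norm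
      (by simpa using (hstep.const_add τ).const_mul M)
      fun n => hcauchy hτ (hpos n) (h τ hτ) (h _ (hpos n)) s hs
  obtain ⟨w, hw⟩ := exists_isApproxSolution_zero_of_tendsto hK hB hr hf hT hL
    (fun n => h _ (hpos n)) hstep fun n => hyτ _ (hpos n)
  exact ⟨y, w, hw, M, hM, hyτ⟩

end Hilbert

end Limit

section Load

variable {G : Type*} [NormedAddCommGroup G]

lemma exists_norm_sub_le_of_boundedVariationOn {g : ℝ → G} {I : Set ℝ}
    (hg : BoundedVariationOn g I) :
    ∃ ω : ℝ → ℝ, ∀ x ∈ I, ∀ y ∈ I, x ≤ y → ‖g y - g x‖ ≤ ω y - ω x := by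
  rcases I.eq_empty_or_nonempty with rfl | ⟨a, ha⟩
  · simp
  refine ⟨variationOnFromTo g I a, fun x hx y hy hxy => ?_⟩
  rw [← variationOnFromTo.add hg.locallyBoundedVariationOn ha hx hy, add_sub_cancel_left,
    variationOnFromTo.eq_of_le _ _ hxy, ← dist_eq_norm]
  exact (hg.locallyBoundedVariationOn x y hx hy).dist_le ⟨hy, hxy, le_rfl⟩ ⟨hx, le_rfl, hxy⟩

variable [NormedSpace ℝ G]

/-- `f` is an `L`-Lipschitz load on `[0, T]` whose derivative `f'` has bounded variation there; the
variation is recorded by a function `ω` whose increments dominate those of `f'`. -/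
structure IsBVLoad (f f' : ℝ → G) (ω : ℝ → ℝ) (L T : ℝ) : Prop where
  hasDerivAt : ∀ s ∈ Icc 0 T, HasDerivAt f (f' s) s
  norm_sub_le : ∀ x ∈ Icc 0 T, ∀ y ∈ Icc 0 T, ‖f x - f y‖ ≤ L * |x - y|
  norm_deriv_sub_le : ∀ x ∈ Icc 0 T, ∀ y ∈ Icc 0 T, x ≤ y → ‖f' y - f' x‖ ≤ ω y - ω x

namespace IsBVLoad

variable {f f' : ℝ → G} {ω : ℝ → ℝ} {L T p q : ℝ}

lemma monotoneOn (hf : IsBVLoad f f' ω L T) : MonotoneOn ω (Icc 0 T) := fun x hx y hy hxy =>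
  sub_nonneg.1 ((norm_nonneg _).trans (hf.norm_deriv_sub_le x hx y hy hxy))

lemma norm_deriv_sub_le_abs (hf : IsBVLoad f f' ω L T) (hp : p ∈ Icc 0 T) (hq : q ∈ Icc 0 T)
    {s : ℝ} (hs : s ∈ uIcc p q) : ‖f' s - f' p‖ ≤ |ω q - ω p| := by
  have hsT : s ∈ Icc 0 T := ordConnected_Icc.uIcc_subset hp hq hs
  rcases le_total p q with hpq | hqp
  · rw [uIcc_of_le hpq] at hs
    rw [abs_of_nonneg (sub_nonneg.2 (hf.monotoneOn hp hq hpq))]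
    linarith [hf.norm_deriv_sub_le p hp s hsT hs.1, hf.monotoneOn hsT hq hs.2]
  · rw [uIcc_of_ge hqp] at hs
    rw [norm_sub_rev, abs_of_nonpos (sub_nonpos.2 (hf.monotoneOn hq hp hqp))]
    linarith [hf.norm_deriv_sub_le s hsT p hp hs.2, hf.monotoneOn hq hsT hs.1]

lemma norm_sub_sub_smul_le (hf : IsBVLoad f f' ω L T) (hp : p ∈ Icc 0 T) (hq : q ∈ Icc 0 T) :
    ‖f q - f p - (q - p) • f' p‖ ≤ |ω q - ω p| * |q - p| := by
  have hderiv : ∀ s ∈ uIcc p q,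
      HasDerivWithinAt (fun s => f s - s • f' p) (f' s - f' p) (uIcc p q) s := fun s hs => by
    simpa using ((hf.hasDerivAt s (ordConnected_Icc.uIcc_subset hp hq hs)).fun_sub
      ((hasDerivAt_id s).smul_const (f' p))).hasDerivWithinAt
  have hmean := (convex_uIcc p q).norm_image_sub_le_of_norm_hasDerivWithin_le hderiv
    (fun s hs => hf.norm_deriv_sub_le_abs hp hq hs) left_mem_uIcc right_mem_uIcc
  rwa [sub_sub_sub_comm, ← sub_smul] at hmean

end IsBVLoad

end Load

section Secant

lemma norm_add_smul_sub_sub_le {G : Type*} [NormedAddCommGroup G] [NormedSpace ℝ G]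
    {g₀ g₁ g d : G} {h ε θ : ℝ} (hθ : θ ∈ Icc 0 1) (h₁ : ‖g₁ - g₀ - h • d‖ ≤ ε)
    (hg : ‖g - g₀ - (θ * h) • d‖ ≤ ε) : ‖g₀ + θ • (g₁ - g₀) - g‖ ≤ 2 * ε :=
  calc _ = ‖θ • (g₁ - g₀ - h • d) - (g - g₀ - (θ * h) • d)‖ := by
        congr 1
        module
    _ ≤ θ * ‖g₁ - g₀ - h • d‖ + ‖g - g₀ - (θ * h) • d‖ := by
        rw [← norm_smul_of_nonneg hθ.1]
        exact norm_sub_le _ _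
    _ ≤ 1 * ε + ε :=
        add_le_add (mul_le_mul hθ.2 h₁ (norm_nonneg _) zero_le_one) hg
    _ = 2 * ε := by ring

variable {E : Type*} [NormedAddCommGroup E] [NormedSpace ℝ E] {B : E → E →L[ℝ] ℝ}
  {H : E → E →L[ℝ] E →L[ℝ] ℝ} {f f' : ℝ → E →L[ℝ] ℝ} {ω : ℝ → ℝ} {κ C L Λ r T : ℝ}

namespace IsConvexGradient

lemma norm_force_sub_sub_smul_le (hB : IsConvexGradient B H κ C r) (hf : IsBVLoad f f' ω L T)
    {p q : ℝ} (hp : p ∈ Icc 0 T) (hq : q ∈ Icc 0 T) {x y v : E} (hx : ‖x‖ ≤ r) (hy : ‖y‖ ≤ r)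
    (hv : ‖v‖ ≤ Λ) (hxy : y - x = (q - p) • v) :
    ‖f q - B y - (f p - B x) - (q - p) • (f' p - H x v)‖ ≤
      |q - p| * (|ω q - ω p| + C * Λ ^ 2 * |q - p|) := by
  have hC := hB.C_nonneg
  have hload := hf.norm_sub_sub_smul_le hp hq
  have htaylor := hB.norm_sub_sub_le hy hx
  have hsplit : f q - B y - (f p - B x) - (q - p) • (f' p - H x v) =
      f q - f p - (q - p) • f' p - (B y - B x - H x (y - x)) := by
    rw [hxy, map_smul]
    module
  calc _ ≤ |ω q - ω p| * |q - p| + C * ‖y - x‖ ^ 2 :=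
        hsplit ▸ (norm_sub_le _ _).trans (add_le_add hload htaylor)
    _ = |ω q - ω p| * |q - p| + C * (|q - p| ^ 2 * ‖v‖ ^ 2) := by
        rw [hxy, norm_smul, Real.norm_eq_abs, mul_pow]
    _ ≤ |ω q - ω p| * |q - p| + C * (|q - p| ^ 2 * Λ ^ 2) := by gcongr
    _ = |q - p| * (|ω q - ω p| + C * Λ ^ 2 * |q - p|) := by ring

lemma two_mul_hessian_apply_le (hB : IsConvexGradient B H κ C r) {x y : E} (hx : ‖x‖ ≤ r)
    (hy : ‖y‖ ≤ r) (v w : E) :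
    2 * H x w v ≤ H y w w + H x v v + C * ‖y - x‖ * ‖w‖ ^ 2 := by
  have hpos := (mul_nonneg hB.κ_pos.le (sq_nonneg _)).trans (hB.coercive x (w - v))
  have hlip := (neg_le_abs _).trans (((H y - H x).le_opNorm₂ w w).trans
    (mul_le_mul_of_nonneg_right (mul_le_mul_of_nonneg_right (hB.lipschitz y x hy hx)
      (norm_nonneg w)) (norm_nonneg w)))
  have hsymm := hB.symm x v w
  simp only [map_sub, sub_apply] at hpos hlip
  linarith

lemma abs_force_sub_apply_sub_le (hB : IsConvexGradient B H κ C r) (hf : IsBVLoad f f' ω L T)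
    {p q : ℝ} (hp : p ∈ Icc 0 T) (hq : q ∈ Icc 0 T) {x y v e : E} (hx : ‖x‖ ≤ r) (hy : ‖y‖ ≤ r)
    (hv : ‖v‖ ≤ Λ) (hxy : y - x = (q - p) • v) (he : ‖e‖ ≤ Λ) :
    |(f q - B y - (f p - B x)) e - (q - p) * (f' p e - H x v e)| ≤
      |q - p| * (|ω q - ω p| + C * Λ ^ 2 * |q - p|) * Λ :=
  ContinuousLinearMap.le_of_opNorm_le_of_le _
    (hB.norm_force_sub_sub_smul_le hf hp hq hx hy hv hxy) he

lemma force_sub_apply_sub_le (hB : IsConvexGradient B H κ C r) (hf : IsBVLoad f f' ω L T)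
    {a b c : ℝ} (ha : 0 ≤ a) (hab : a < b) (hbc : b < c) (hc : c ≤ T) {x y z v w : E}
    (hx : ‖x‖ ≤ r) (hy : ‖y‖ ≤ r) (hz : ‖z‖ ≤ r) (hv : ‖v‖ ≤ Λ) (hw : ‖w‖ ≤ Λ)
    (hxy : y - x = (b - a) • v) (hyz : z - y = (c - b) • w)
    (hnonpos : (f c - B z - (f b - B y)) v ≤ 0) :
    (f b - B y - (f a - B x)) v ≤ (b - a) * ((H z w w - H y v v) / 2 +
      Λ * (ω c - ω a) + 2 * C * Λ ^ 3 * (c - a)) := by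
  have hC := hB.C_nonneg
  have hΛ := (norm_nonneg v).trans hv
  have haT : a ∈ Icc 0 T := ⟨ha, by linarith⟩
  have hbT : b ∈ Icc 0 T := ⟨by linarith, by linarith⟩
  have hcT : c ∈ Icc 0 T := ⟨by linarith, hc⟩
  have hback : (f b - B y - (f a - B x)) v ≤
      (b - a) * (f' b v - H y v v + Λ * (ω b - ω a) + C * Λ ^ 3 * (b - a)) := by
    have hsecant := (neg_le_abs _).trans (hB.abs_force_sub_apply_sub_le hf hbT haT hy hx hv
      (by rw [← neg_sub, hxy, ← neg_smul, neg_sub]) hv)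
    rw [abs_sub_comm a, abs_sub_comm (ω a), abs_of_pos (sub_pos.2 hab),
      abs_of_nonneg (sub_nonneg.2 (hf.monotoneOn haT hbT hab.le))] at hsecant
    simp only [sub_apply] at hsecant ⊢
    linarith
  -- The flow rule of the next step bounds `f' b`, which makes the estimate telescope.
  have hforward : f' b v ≤ H y w v + Λ * (ω c - ω b) + C * Λ ^ 3 * (c - b) := by
    have hsecant := (neg_le_abs _).trans (hB.abs_force_sub_apply_sub_le hf hbT hcT hy hz hw hyz hv)
    rw [abs_of_pos (sub_pos.2 hbc),
      abs_of_nonneg (sub_nonneg.2 (hf.monotoneOn hbT hcT hbc.le))] at hsecant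
    refine le_of_mul_le_mul_left ?_ (sub_pos.2 hbc)
    linarith
  have hpolar : 2 * H y w v ≤ H z w w + H y v v + C * Λ ^ 3 * (c - b) := by
    refine (hB.two_mul_hessian_apply_le hy hz v w).trans (add_le_add_right ?_ _)
    rw [hyz, norm_smul, Real.norm_of_nonneg (sub_nonneg.2 hbc.le)]
    calc _ ≤ C * ((c - b) * Λ) * Λ ^ 2 := by gcongr
      _ = C * Λ ^ 3 * (c - b) := by ring
  refine hback.trans (mul_le_mul_of_nonneg_left ?_ (sub_nonneg.2 hab.le))
  have hpos : 0 ≤ C * Λ ^ 3 := by positivity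
  nlinarith

lemma norm_add_smul_force_sub_le (hB : IsConvexGradient B H κ C r) (hf : IsBVLoad f f' ω L T)
    {a b s : ℝ} (ha : 0 ≤ a) (hab : a < b) (hb : b ≤ T) (hs : s ∈ Icc a b) {x y v : E}
    (hx : ‖x‖ ≤ r) (hy : ‖y‖ ≤ r) (hv : ‖v‖ ≤ Λ) (hxy : y - x = (b - a) • v) :
    ‖f a - B x + ((s - a) / (b - a)) • (f b - B y - (f a - B x)) -
        (f s - B (x + (s - a) • v))‖ ≤ 2 * (b - a) * (ω b - ω a + C * Λ ^ 2 * (b - a)) := by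
  have hC := hB.C_nonneg
  have hh : 0 < b - a := sub_pos.2 hab
  set θ := (s - a) / (b - a)
  have hθ : θ ∈ Icc 0 1 := ⟨div_nonneg (sub_nonneg.2 hs.1) hh.le,
    (div_le_one hh).2 (sub_le_sub_right hs.2 a)⟩
  have hθs : s - a = θ * (b - a) := (div_mul_cancel₀ _ hh.ne').symm
  have hu : ‖x + (s - a) • v‖ ≤ r := by
    rw [hθs, mul_smul, ← hxy, ← mem_closedBall_zero_iff]
    exact (convex_closedBall (0 : E) r).add_smul_sub_mem (mem_closedBall_zero_iff.2 hx)
      (mem_closedBall_zero_iff.2 hy) hθ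
  have haT : a ∈ Icc 0 T := ⟨ha, by linarith⟩
  have hsT : s ∈ Icc 0 T := ⟨ha.trans hs.1, hs.2.trans hb⟩
  have hbT : b ∈ Icc 0 T := ⟨ha.trans hab.le, hb⟩
  have hω := hf.monotoneOn haT hbT hab.le
  have hend := hB.norm_force_sub_sub_smul_le hf haT hbT hx hy hv hxy
  have hinner := hB.norm_force_sub_sub_smul_le hf haT hsT hx hu hv (add_sub_cancel_left x _)
  rw [abs_of_pos hh, abs_of_nonneg (sub_nonneg.2 hω)] at hend
  rw [abs_of_nonneg (sub_nonneg.2 hs.1),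
    abs_of_nonneg (sub_nonneg.2 (hf.monotoneOn haT hsT hs.1))] at hinner
  have hmono : (s - a) * (ω s - ω a + C * Λ ^ 2 * (s - a)) ≤
      (b - a) * (ω b - ω a + C * Λ ^ 2 * (b - a)) := by
    gcongr
    · exact add_nonneg (sub_nonneg.2 (hf.monotoneOn haT hsT hs.1))
        (mul_nonneg (by positivity) (sub_nonneg.2 hs.1))
    · exact hs.2
    · exact hf.monotoneOn hsT hbT hs.2
    · exact hs.2
  rw [mul_assoc]
  exact norm_add_smul_sub_sub_le hθ hend (hθs ▸ hinner.trans hmono)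

end IsConvexGradient

end Secant

section Minimization

variable {E : Type*} [NormedAddCommGroup E] [NormedSpace ℝ E] {φ j : E → ℝ} {φ' : E →L[ℝ] ℝ}
  {D : Set E} {x y : E}

lemma nonneg_add_of_eventually_le {d : E} {c : ℝ} (hφ : HasFDerivAt φ φ' x)
    (hmin : ∀ᶠ s in 𝓝[>] (0 : ℝ), φ x ≤ φ (x + s • d) + s * c) : 0 ≤ φ' d + c := by
  have hslope := (hasDerivAt_iff_tendsto_slope_zero.1 (hφ.hasLineDerivAt d)).mono_left
    (nhdsWithin_mono (0 : ℝ) (show Ioi 0 ⊆ {0}ᶜ from fun s hs => ne_of_gt hs))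
  refine ge_of_tendsto (hslope.add_const c) ?_
  filter_upwards [hmin, self_mem_nhdsWithin] with s hs (hs₀ : 0 < s)
  have hscaled := mul_nonneg (inv_nonneg.2 hs₀.le) (sub_nonneg.2 hs)
  rw [add_sub_right_comm, mul_add, inv_mul_cancel_left₀ hs₀.ne'] at hscaled
  simpa using hscaled

lemma IsSublinear.apply_sub_le_of_isMinOn (hj : IsSublinear j) (hφ : HasFDerivAt φ φ' x)
    (hD : Convex ℝ D) (hxD : x ∈ D) (hyD : y ∈ D) (hmin : IsMinOn (fun z => φ z + j (z - y)) D x) :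
    j (x - y) ≤ -φ' (x - y) := by
  have hderiv := nonneg_add_of_eventually_le (d := y - x) (c := -j (x - y)) hφ <| by
    filter_upwards [Ioo_mem_nhdsGT zero_lt_one] with s hs
    have hle := hmin (hD.add_smul_sub_mem hxD hyD (Ioo_subset_Icc_self hs))
    have hshrink : x + s • (y - x) - y = (1 - s) • (x - y) := by module
    simp only [hshrink, hj.smul _ _ (sub_nonneg.2 hs.2.le), mem_ofPred_eq] at hle
    linarith
  rw [← neg_sub x y, map_neg] at hderiv
  linarith

lemma IsSublinear.neg_mem_stableForces_of_isMinOn (hj : IsSublinear j) (hφ : HasFDerivAt φ φ' x)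
    (hD : D ∈ 𝓝 x) (hmin : IsMinOn (fun z => φ z + j (z - y)) D x) :
    -φ' ∈ stableForces j := fun d => by
  have hpath : Tendsto (fun s : ℝ => x + s • d) (𝓝[>] 0) (𝓝 x) :=
    ((by fun_prop : Continuous fun s : ℝ => x + s • d).tendsto' 0 x (by simp)).mono_left
      nhdsWithin_le_nhds
  have hderiv := nonneg_add_of_eventually_le (d := d) (c := j d) hφ <| by
    filter_upwards [hpath.eventually_mem hD, self_mem_nhdsWithin] with s hs (hs₀ : 0 < s)
    have hle := hmin hs
    have hadd := hj.add_le (x - y) (s • d)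
    rw [hj.smul _ _ hs₀.le, ← add_sub_right_comm] at hadd
    simp only [mem_ofPred_eq] at hle
    linarith
  rw [neg_apply]
  linarith

lemma IsConvexGradient.mul_norm_sub_le_norm_sub {B : E → E →L[ℝ] ℝ} {H : E → E →L[ℝ] E →L[ℝ] ℝ}
    {κ C r : ℝ} (hB : IsConvexGradient B H κ C r) {g₀ g₁ : E →L[ℝ] ℝ}
    (hle : (g₀ - B y) (x - y) ≤ (g₁ - B x) (x - y)) : κ * ‖x - y‖ ≤ ‖g₁ - g₀‖ := by
  rcases (norm_nonneg (x - y)).eq_or_lt with h₀ | hpos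
  · simp [← h₀]
  refine le_of_mul_le_mul_right ?_ hpos
  have hmono := hB.mul_norm_sub_sq_le x y
  have hforce := (le_abs_self _).trans ((g₁ - g₀).le_opNorm (x - y))
  simp only [sub_apply] at hle hmono hforce
  linarith

end Minimization

section EulerScheme

variable {E W : Type*} [NormedAddCommGroup E] [NormedSpace ℝ E]
  [NormedAddCommGroup W] [NormedSpace ℝ W]

/-- The points `w 0, …, w N` at the times `0 = t 0 < ⋯ < t N = T` solve the implicit Euler scheme
of the evolution whose forces `f - B u` stay in `K` and are normal to it along `u'`, with mesh size
at most `τ` and discrete speed at most `Λ`. -/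
structure IsEulerApprox (B : E → E →L[ℝ] ℝ) (f : ℝ → E →L[ℝ] ℝ) (K : Set (E →L[ℝ] ℝ))
    (Λ τ T : ℝ) (z₀ : E) (N : ℕ) (t : ℕ → ℝ) (w : ℕ → E) : Prop where
  time_zero : t 0 = 0
  time_last : t N = T
  time_lt : ∀ k < N, t k < t (k + 1)
  time_sub_le : ∀ k < N, t (k + 1) - t k ≤ τ
  zero : w 0 = z₀
  force_mem : ∀ k ≤ N, f (t k) - B (w k) ∈ K
  normal : ∀ k < N, ∀ η ∈ K,
    η (w (k + 1) - w k) ≤ (f (t (k + 1)) - B (w (k + 1))) (w (k + 1) - w k)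
  norm_sub_le : ∀ k < N, ‖w (k + 1) - w k‖ ≤ Λ * (t (k + 1) - t k)

variable {B : E → E →L[ℝ] ℝ} {H : E → E →L[ℝ] E →L[ℝ] ℝ} {j : E → ℝ} {ι : E →L[ℝ] W}
  {κ C r Λ τ : ℝ}

lemma IsConvexGradient.local_minimizer_spec (hB : IsConvexGradient B H κ C r) (hj : IsSublinear j)
    {φ : E → ℝ} {g₀ g₁ : E →L[ℝ] ℝ} {x y : E} {h : ℝ} (hι : ∀ v, ‖ι v‖ ≤ ‖v‖) (hτ : 0 < τ)
    (hΛ : 0 ≤ Λ) (hΛ₁ : Λ < 1) (hh : h ≤ τ) (hg : ‖g₁ - g₀‖ ≤ κ * Λ * h)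
    (hstable : g₀ - B y ∈ stableForces j) (hφ : HasFDerivAt φ (B x - g₁) x)
    (hx : x ∈ ι ⁻¹' Metric.closedBall (ι y) τ)
    (hmin : IsMinOn (fun z => φ z + j (z - y)) (ι ⁻¹' Metric.closedBall (ι y) τ) x) :
    ‖x - y‖ ≤ Λ * h ∧ g₁ - B x ∈ stableForces j ∧
      ∀ η ∈ stableForces j, η (x - y) ≤ (g₁ - B x) (x - y) := by
  have hdissipation : j (x - y) ≤ (g₁ - B x) (x - y) := by
    simpa only [neg_apply, ← neg_sub (B x) g₁] using hj.apply_sub_le_of_isMinOn hφ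
      ((convex_closedBall (ι y) τ).linear_preimage ι.toLinearMap) hx
      (by simp [hτ.le]) hmin
  have hnorm : ‖x - y‖ ≤ Λ * h := by
    refine le_of_mul_le_mul_left ?_ hB.κ_pos
    rw [← mul_assoc]
    exact (hB.mul_norm_sub_le_norm_sub ((hstable _).trans hdissipation)).trans hg
  have hinterior : ι x ∈ Metric.ball (ι y) τ := by
    rw [mem_ball_iff_norm, ← map_sub]
    have hlt := mul_lt_of_lt_one_left hτ hΛ₁
    linarith [hι (x - y), mul_le_mul_of_nonneg_left hh hΛ]
  refine ⟨hnorm, ?_, fun η hη => (hη _).trans hdissipation⟩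
  rw [← neg_sub (B x) g₁]
  exact hj.neg_mem_stableForces_of_isMinOn hφ (ι.continuous.continuousAt.preimage_mem_nhds
    (Metric.closedBall_mem_nhds_of_mem hinterior)) hmin

end EulerScheme

namespace Scheme

variable {E W : Type*} [NormedAddCommGroup E] [InnerProductSpace ℝ E]
  [NormedAddCommGroup W] [InnerProductSpace ℝ W]
  {B : E → E →L[ℝ] ℝ} {H : E → E →L[ℝ] E →L[ℝ] ℝ} {f : ℝ → E →L[ℝ] ℝ}
  {ι : E →L[ℝ] W} {κ C r Λ τ T : ℝ} {z₀ : E} {t : ℕ → ℝ} {z : ℕ → E} {N : ℕ}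
  {A : E →L[ℝ] E →L[ℝ] ℝ} {F : E → ℝ} {R : W → ℝ} {ℓ : ℝ → W →L[ℝ] ℝ}

lemma time_mem (h : Scheme A F R ℓ ι T τ z₀ t z) (hT : 0 ≤ T) : ∀ k, t k ∈ Icc 0 T
  | 0 => by simp [h.1, hT]
  | k + 1 => by
    have hk := h.time_mem hT k
    rw [(h.2.2 k).2.2]
    exact ⟨le_min (by linarith [hk.1, (h.2.2 k).1]) hT, min_le_right _ _⟩

lemma time_monotone (h : Scheme A F R ℓ ι T τ z₀ t z) (hT : 0 ≤ T) : Monotone t :=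
  monotone_nat_of_le_succ fun k => by
    rw [(h.2.2 k).2.2]
    exact le_min (by linarith [(h.2.2 k).1]) (h.time_mem hT k).2

lemma time_succ_sub_le (h : Scheme A F R ℓ ι T τ z₀ t z) (k : ℕ) : t (k + 1) - t k ≤ τ := by
  rw [(h.2.2 k).2.2]
  linarith [min_le_left (t k + τ - ‖ι (z (k + 1) - z k)‖) T, norm_nonneg (ι (z (k + 1) - z k))]

lemma time_sub_pred_le (h : Scheme A F R ℓ ι T τ z₀ t z) (hτ : 0 < τ) :
    ∀ k, t k - t (k - 1) ≤ τ
  | 0 => by simpa using hτ.le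
  | k + 1 => h.time_succ_sub_le k

-- Truncated subtraction gives `t (0 - 1) = t 0`: the first iterate does not move.
lemma iterate_spec (h : Scheme A F R ℓ ι T τ z₀ t z) (hT : 0 ≤ T) (hτ : 0 < τ)
    (hB : IsConvexGradient B H κ C r) (hR : IsSublinear R) (hι : ∀ v, ‖ι v‖ ≤ ‖v‖) (hΛ : 0 ≤ Λ)
    (hΛ₁ : Λ < 1) (hf : ∀ x ∈ Icc 0 T, ∀ y ∈ Icc 0 T, ‖f x - f y‖ ≤ κ * Λ * |x - y|)
    (henergy : ∀ s x, HasFDerivAt (energy A F ℓ ι s) (B x - f s) x)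
    (hz₀ : f 0 - B z₀ ∈ stableForces fun v => R (ι v)) (k : ℕ) :
    ‖z (k + 1) - z k‖ ≤ Λ * (t k - t (k - 1)) ∧
      f (t k) - B (z (k + 1)) ∈ stableForces (fun v => R (ι v)) ∧
      ∀ η ∈ stableForces (fun v => R (ι v)),
        η (z (k + 1) - z k) ≤ (f (t k) - B (z (k + 1))) (z (k + 1) - z k) := by
  have hstep (k : ℕ) (hstable : f (t (k - 1)) - B (z k) ∈ stableForces fun v => R (ι v)) :=
    hB.local_minimizer_spec (hR.comp_clm ι) (x := z (k + 1)) hι hτ hΛ hΛ₁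
      (h.time_sub_pred_le hτ k)
      (by simpa only [abs_of_nonneg (sub_nonneg.2 (h.time_monotone hT (k.sub_le 1)))] using
        hf (t k) (h.time_mem hT k) (t (k - 1)) (h.time_mem hT (k - 1)))
      hstable (henergy (t k) _)
      (by simpa only [mem_preimage, mem_closedBall_iff_norm, ← map_sub] using (h.2.2 k).1)
      (fun x hx => (h.2.2 k).2.1 x
        (by simpa only [mem_preimage, mem_closedBall_iff_norm, ← map_sub] using hx))
  induction k with
  | zero => exact hstep 0 (by simpa only [Nat.zero_sub, h.1, h.2.1] using hz₀)
  | succ k ih => exact hstep (k + 1) ih.2.1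

lemma isEulerApprox (h : Scheme A F R ℓ ι T τ z₀ t z) (hT : 0 ≤ T) (hτ : 0 < τ)
    (hB : IsConvexGradient B H κ C r) (hR : IsSublinear R) (hι : ∀ v, ‖ι v‖ ≤ ‖v‖) (hΛ : 0 ≤ Λ)
    (hΛ₁ : Λ < 1) (hf : ∀ x ∈ Icc 0 T, ∀ y ∈ Icc 0 T, ‖f x - f y‖ ≤ κ * Λ * |x - y|)
    (henergy : ∀ s x, HasFDerivAt (energy A F ℓ ι s) (B x - f s) x)
    (hz₀ : f 0 - B z₀ ∈ stableForces fun v => R (ι v)) (hN : t N = T ∧ ∀ k < N, t k < T) :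
    IsEulerApprox B f (stableForces fun v => R (ι v)) Λ τ T z₀ N t (fun k => z (k + 1)) ∧
      ∀ k, ‖z (k + 1) - z k‖ ≤ Λ * τ := by
  have hspec := h.iterate_spec hT hτ hB hR hι hΛ hΛ₁ hf henergy hz₀
  have hnorm : ∀ k, ‖z (k + 1) - z k‖ ≤ Λ * τ := fun k =>
    (hspec k).1.trans (mul_le_mul_of_nonneg_left (h.time_sub_pred_le hτ k) hΛ)
  have hz₁ : z 1 = z₀ := by
    simpa [sub_eq_zero, h.2.1] using (hspec 0).1
  refine ⟨⟨h.1, hN.1, fun k hk => ?_, fun k _ => h.time_succ_sub_le k, hz₁,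
    fun k _ => (hspec k).2.1, fun k _ => (hspec (k + 1)).2.2, fun k _ => (hspec (k + 1)).1⟩, hnorm⟩
  rw [(h.2.2 k).2.2]
  have hlt := mul_lt_of_lt_one_left hτ hΛ₁
  exact lt_min (by linarith [hι (z (k + 1) - z k), hnorm k]) (hN.2 k hk)

end Scheme

section DiscreteDefect

variable {E : Type*} [NormedAddCommGroup E] [NormedSpace ℝ E]

/-- The velocity of the piecewise affine interpolant of the points `w` at the times `t`. -/
def discreteVelocity (t : ℕ → ℝ) (w : ℕ → E) (k : ℕ) : E :=
  (t (k + 1) - t k)⁻¹ • (w (k + 1) - w k)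

/-- The power of the force increment along the discrete velocity; it measures how much normality
fails between two consecutive times. -/
def discreteDefect (B : E → E →L[ℝ] ℝ) (f : ℝ → E →L[ℝ] ℝ) (t : ℕ → ℝ) (w : ℕ → E) (k : ℕ) : ℝ :=
  (f (t (k + 1)) - B (w (k + 1)) - (f (t k) - B (w k))) (discreteVelocity t w k)

/-- A discrete kinetic energy, corrected by nondecreasing terms, whose increments dominate the
discrete defects. -/
def defectPotential (H : E → E →L[ℝ] E →L[ℝ] ℝ) (ω : ℝ → ℝ) (C Λ : ℝ) (t : ℕ → ℝ) (w : ℕ → E)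
    (k : ℕ) : ℝ :=
  H (w (k + 1)) (discreteVelocity t w k) (discreteVelocity t w k) / 2 +
    Λ * (ω (t (k + 1)) + ω (t k)) + 2 * C * Λ ^ 3 * (t (k + 1) + t k)

/-- The bound for the sum of the discrete defects, in units of the squared mesh size. The number
`M` stands for a bound of the Hessian. -/
def defectBound (ω : ℝ → ℝ) (C L M Λ T : ℝ) : ℝ :=
  M * Λ ^ 2 / 2 + 2 * Λ * (ω T - ω 0) + 4 * C * Λ ^ 3 * T + L * Λ

namespace IsEulerApprox

variable {B : E → E →L[ℝ] ℝ} {H : E → E →L[ℝ] E →L[ℝ] ℝ} {f f' : ℝ → E →L[ℝ] ℝ}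
  {K : Set (E →L[ℝ] ℝ)} {ω : ℝ → ℝ} {κ C L Λ r τ T : ℝ} {z₀ : E} {N k l : ℕ} {t : ℕ → ℝ}
  {w : ℕ → E}

lemma time_le (h : IsEulerApprox B f K Λ τ T z₀ N t w) (hkl : k ≤ l) (hl : l ≤ N) :
    t k ≤ t l := by
  induction l, hkl using Nat.le_induction with
  | base => exact le_rfl
  | succ l _ ih => exact (ih (l.le_succ.trans hl)).trans (h.time_lt l hl).le

lemma time_mem (h : IsEulerApprox B f K Λ τ T z₀ N t w) (hk : k ≤ N) : t k ∈ Icc 0 T :=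
  ⟨h.time_zero.symm.trans_le (h.time_le k.zero_le hk), (h.time_le hk le_rfl).trans_eq h.time_last⟩

lemma norm_apply_le (h : IsEulerApprox B f K Λ τ T z₀ N t w) (hΛ : 0 ≤ Λ)
    (hr : ‖z₀‖ + Λ * T ≤ r) (hk : k ≤ N) : ‖w k‖ ≤ r := by
  have hgrowth : ‖w k‖ ≤ ‖z₀‖ + Λ * t k := by
    induction k with
    | zero => simp [h.zero, h.time_zero]
    | succ k ih =>
      linarith [ih (k.le_succ.trans hk), h.norm_sub_le k hk,
        norm_le_norm_add_norm_sub' (w (k + 1)) (w k)]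
  linarith [mul_le_mul_of_nonneg_left (h.time_mem hk).2 hΛ]

lemma sub_eq_smul_discreteVelocity (h : IsEulerApprox B f K Λ τ T z₀ N t w) (hk : k < N) :
    w (k + 1) - w k = (t (k + 1) - t k) • discreteVelocity t w k :=
  (smul_inv_smul₀ (sub_pos.2 (h.time_lt k hk)).ne' _).symm

lemma norm_discreteVelocity_le (h : IsEulerApprox B f K Λ τ T z₀ N t w) (hk : k < N) :
    ‖discreteVelocity t w k‖ ≤ Λ := by
  have hh := sub_pos.2 (h.time_lt k hk)
  rw [discreteVelocity, norm_smul, norm_inv, Real.norm_of_nonneg hh.le, inv_mul_le_iff₀ hh,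
    mul_comm]
  exact h.norm_sub_le k hk

lemma apply_discreteVelocity_le (h : IsEulerApprox B f K Λ τ T z₀ N t w) (hk : k < N)
    {η : E →L[ℝ] ℝ} (hη : η ∈ K) :
    η (discreteVelocity t w k) ≤ (f (t (k + 1)) - B (w (k + 1))) (discreteVelocity t w k) := by
  have hh := sub_pos.2 (h.time_lt k hk)
  have hnormal := h.normal k hk η hη
  rw [h.sub_eq_smul_discreteVelocity hk, map_smul, map_smul] at hnormal
  exact le_of_smul_le_smul_left hnormal hh

lemma discreteDefect_nonneg (h : IsEulerApprox B f K Λ τ T z₀ N t w) (hk : k < N) :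
    0 ≤ discreteDefect B f t w k := by
  rw [discreteDefect, sub_apply]
  exact sub_nonneg.2 (h.apply_discreteVelocity_le hk (h.force_mem k hk.le))

lemma discreteDefect_le (h : IsEulerApprox B f K Λ τ T z₀ N t w) (hB : IsConvexGradient B H κ C r)
    (hf : IsBVLoad f f' ω L T) (hk : k < N) :
    discreteDefect B f t w k ≤ L * Λ * (t (k + 1) - t k) := by
  have hh := sub_pos.2 (h.time_lt k hk)
  have hmono : 0 ≤ (B (w (k + 1)) - B (w k)) (discreteVelocity t w k) := by
    have hstrong := (mul_nonneg hB.κ_pos.le (sq_nonneg _)).trans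
      (hB.mul_norm_sub_sq_le (w (k + 1)) (w k))
    rw [h.sub_eq_smul_discreteVelocity hk, map_smul] at hstrong
    exact (smul_nonneg_iff_nonneg_of_pos_left hh).1 hstrong
  have hload : ‖f (t (k + 1)) - f (t k)‖ ≤ L * (t (k + 1) - t k) := by
    simpa only [abs_of_pos hh] using hf.norm_sub_le _ (h.time_mem hk) _ (h.time_mem hk.le)
  have hpower := (le_abs_self _).trans
    (ContinuousLinearMap.le_of_opNorm_le_of_le _ hload (h.norm_discreteVelocity_le hk))
  rw [discreteDefect, sub_sub_sub_comm, sub_apply]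
  linarith

lemma mul_discreteDefect_le (h : IsEulerApprox B f K Λ τ T z₀ N t w)
    (hB : IsConvexGradient B H κ C r) (hf : IsBVLoad f f' ω L T) (hΛ : 0 ≤ Λ)
    (hr : ‖z₀‖ + Λ * T ≤ r) (hk : k + 1 < N) :
    (t (k + 1) - t k) * discreteDefect B f t w k ≤
      τ ^ 2 * (defectPotential H ω C Λ t w (k + 1) - defectPotential H ω C Λ t w k) := by
  have hk' : k < N := k.lt_succ_self.trans hk
  have hh := sub_pos.2 (h.time_lt k hk')
  have hdefect := h.discreteDefect_nonneg hk'
  have hpotential : discreteDefect B f t w k ≤ (t (k + 1) - t k) *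
      (defectPotential H ω C Λ t w (k + 1) - defectPotential H ω C Λ t w k) := by
    refine (hB.force_sub_apply_sub_le hf (h.time_mem hk'.le).1 (h.time_lt k hk')
      (h.time_lt (k + 1) hk) (h.time_mem hk).2 (h.norm_apply_le hΛ hr hk'.le)
      (h.norm_apply_le hΛ hr hk.le) (h.norm_apply_le hΛ hr hk) (h.norm_discreteVelocity_le hk')
      (h.norm_discreteVelocity_le hk) (h.sub_eq_smul_discreteVelocity hk')
      (h.sub_eq_smul_discreteVelocity hk) ?_).trans_eq ?_
    · rw [sub_apply]
      exact sub_nonpos.2 (h.apply_discreteVelocity_le hk' (h.force_mem (k + 2) hk))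
    · simp only [defectPotential]
      ring
  have hincrement := nonneg_of_mul_nonneg_right (hdefect.trans hpotential) hh
  calc (t (k + 1) - t k) * discreteDefect B f t w k
      ≤ (t (k + 1) - t k) * ((t (k + 1) - t k) *
          (defectPotential H ω C Λ t w (k + 1) - defectPotential H ω C Λ t w k)) := by gcongr
    _ = (t (k + 1) - t k) ^ 2 *
          (defectPotential H ω C Λ t w (k + 1) - defectPotential H ω C Λ t w k) := by ring
    _ ≤ _ := by gcongr; exact h.time_sub_le k hk'

lemma variation_time_mem (h : IsEulerApprox B f K Λ τ T z₀ N t w) (hf : IsBVLoad f f' ω L T)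
    (hk : k ≤ N) : ω (t k) ∈ Icc (ω 0) (ω T) := by
  have hkT := h.time_mem hk
  have hT := hkT.1.trans hkT.2
  exact ⟨hf.monotoneOn (left_mem_Icc.2 hT) hkT hkT.1, hf.monotoneOn hkT (right_mem_Icc.2 hT) hkT.2⟩

lemma le_defectPotential (h : IsEulerApprox B f K Λ τ T z₀ N t w) (hB : IsConvexGradient B H κ C r)
    (hf : IsBVLoad f f' ω L T) (hΛ : 0 ≤ Λ) (hk : k < N) :
    2 * Λ * ω 0 ≤ defectPotential H ω C Λ t w k := by
  have hkinetic := (mul_nonneg hB.κ_pos.le (sq_nonneg _)).trans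
    (hB.coercive (w (k + 1)) (discreteVelocity t w k))
  have hvariation : Λ * (2 * ω 0) ≤ Λ * (ω (t (k + 1)) + ω (t k)) :=
    mul_le_mul_of_nonneg_left
      (by linarith [(h.variation_time_mem hf hk).1, (h.variation_time_mem hf hk.le).1]) hΛ
  have htime : 0 ≤ 2 * C * Λ ^ 3 * (t (k + 1) + t k) :=
    mul_nonneg (by have := hB.C_nonneg; positivity)
      (add_nonneg (h.time_mem hk).1 (h.time_mem hk.le).1)
  rw [defectPotential]
  linarith

lemma defectPotential_le (h : IsEulerApprox B f K Λ τ T z₀ N t w) (hB : IsConvexGradient B H κ C r)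
    (hf : IsBVLoad f f' ω L T) (hΛ : 0 ≤ Λ) (hr : ‖z₀‖ + Λ * T ≤ r) (hk : k < N) :
    defectPotential H ω C Λ t w k ≤
      (‖H 0‖ + C * r) * Λ ^ 2 / 2 + 2 * Λ * ω T + 4 * C * Λ ^ 3 * T := by
  have hC := hB.C_nonneg
  have hv := h.norm_discreteVelocity_le hk
  have hkinetic : H (w (k + 1)) (discreteVelocity t w k) (discreteVelocity t w k) ≤
      (‖H 0‖ + C * r) * Λ ^ 2 := by
    rw [sq, ← mul_assoc]
    exact (le_abs_self _).trans (ContinuousLinearMap.le_of_opNorm_le_of_le _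
      (ContinuousLinearMap.le_of_opNorm_le_of_le _
        (hB.norm_hessian_le (h.norm_apply_le hΛ hr hk)) hv) hv)
  have hvariation : Λ * (ω (t (k + 1)) + ω (t k)) ≤ Λ * (2 * ω T) :=
    mul_le_mul_of_nonneg_left
      (by linarith [(h.variation_time_mem hf hk).2, (h.variation_time_mem hf hk.le).2]) hΛ
  have htime : 2 * C * Λ ^ 3 * (t (k + 1) + t k) ≤ 2 * C * Λ ^ 3 * (2 * T) :=
    mul_le_mul_of_nonneg_left (by linarith [(h.time_mem hk).2, (h.time_mem hk.le).2])
      (by positivity)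
  rw [defectPotential]
  linarith

lemma sum_mul_discreteDefect_le (h : IsEulerApprox B f K Λ τ T z₀ N t w)
    (hB : IsConvexGradient B H κ C r) (hf : IsBVLoad f f' ω L T) (hΛ : 0 ≤ Λ)
    (hr : ‖z₀‖ + Λ * T ≤ r) (hT : 0 < T) (hL : 0 ≤ L) :
    ∑ k ∈ Finset.range N, (t (k + 1) - t k) * discreteDefect B f t w k ≤
      defectBound ω C L (‖H 0‖ + C * r) Λ T * τ ^ 2 := by
  obtain ⟨n, rfl⟩ : ∃ n, N = n + 1 := Nat.exists_eq_succ_of_ne_zero <| by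
    rintro rfl
    exact hT.ne (h.time_zero.symm.trans h.time_last)
  have hinitial : ∑ k ∈ Finset.range n, (t (k + 1) - t k) * discreteDefect B f t w k ≤
      τ ^ 2 * (defectPotential H ω C Λ t w n - defectPotential H ω C Λ t w 0) := by
    rw [← Finset.sum_range_sub, Finset.mul_sum]
    exact Finset.sum_le_sum fun k hk =>
      h.mul_discreteDefect_le hB hf hΛ hr (Nat.succ_lt_succ (Finset.mem_range.1 hk))
  have hlast : (t (n + 1) - t n) * discreteDefect B f t w n ≤ L * Λ * τ ^ 2 := by
    have hh := sub_nonneg.2 (h.time_lt n n.lt_succ_self).le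
    calc (t (n + 1) - t n) * discreteDefect B f t w n
        ≤ (t (n + 1) - t n) * (L * Λ * (t (n + 1) - t n)) := by
          gcongr
          exact h.discreteDefect_le hB hf n.lt_succ_self
      _ = L * Λ * (t (n + 1) - t n) ^ 2 := by ring
      _ ≤ L * Λ * τ ^ 2 := by
          gcongr
          exact h.time_sub_le n n.lt_succ_self
  have htelescope := mul_le_mul_of_nonneg_left
    (sub_le_sub (h.defectPotential_le hB hf hΛ hr n.lt_succ_self)
      (h.le_defectPotential hB hf hΛ n.succ_pos)) (sq_nonneg τ)
  rw [Finset.sum_range_succ, defectBound]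
  linarith

end IsEulerApprox

end DiscreteDefect

section StepFunction

variable {E : Type*} [NormedAddCommGroup E] {N : ℕ} {t : ℕ → ℝ} {c : ℕ → E}

/-- The step function with value `c k` on `(t k, t (k + 1)]` for `k < N`, and `0` elsewhere. -/
def stepFunction (N : ℕ) (t : ℕ → ℝ) (c : ℕ → E) (s : ℝ) : E :=
  ∑ k ∈ Finset.range N, (Ioc (t k) (t (k + 1))).indicator (fun _ => c k) s

lemma exists_mem_Ioc_succ {s : ℝ} (hs : s ∈ Ioc (t 0) (t N)) :
    ∃ k < N, s ∈ Ioc (t k) (t (k + 1)) := by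
  induction N with
  | zero => simp at hs
  | succ n ih =>
    rcases le_or_gt s (t n) with hle | hlt
    · obtain ⟨k, hk, hsk⟩ := ih ⟨hs.1, hle⟩
      exact ⟨k, hk.trans n.lt_succ_self, hsk⟩
    · exact ⟨n, n.lt_succ_self, hlt, hs.2⟩

lemma stepFunction_apply (ht : MonotoneOn t (Iic N)) {k : ℕ} (hk : k < N) {s : ℝ}
    (hs : s ∈ Ioc (t k) (t (k + 1))) : stepFunction N t c s = c k := by
  rw [stepFunction, Finset.sum_eq_single_of_mem k (Finset.mem_range.2 hk),
    indicator_of_mem hs]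
  intro l hl hne
  have hlN := Finset.mem_range.1 hl
  refine indicator_of_notMem (fun hsl => ?_) _
  rcases hne.lt_or_gt with hlt | hgt
  · exact (hs.1.trans_le hsl.2).not_ge (ht hlN hk.le hlt)
  · exact (hsl.1.trans_le hs.2).not_ge (ht hk hlN.le hgt)

lemma stepFunction_induction (ht : MonotoneOn t (Iic N)) {P : E → Prop} (hzero : P 0)
    (hval : ∀ k < N, P (c k)) (s : ℝ) : P (stepFunction N t c s) := by
  by_cases hs : ∃ k < N, s ∈ Ioc (t k) (t (k + 1))
  · obtain ⟨k, hk, hsk⟩ := hs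
    rw [stepFunction_apply ht hk hsk]
    exact hval k hk
  · push Not at hs
    rwa [stepFunction, Finset.sum_eq_zero fun k hk =>
      indicator_of_notMem (hs k (Finset.mem_range.1 hk)) _]

lemma intervalIntegrable_stepFunction (a b : ℝ) :
    IntervalIntegrable (stepFunction N t c) volume a b := by
  rw [intervalIntegrable_iff]
  unfold stepFunction
  exact integrable_finsetSum _ fun k _ =>
    (integrableOn_const measure_Ioc_lt_top.ne).indicator measurableSet_Ioc

variable [NormedSpace ℝ E] [CompleteSpace E]

lemma integral_stepFunction (ht : MonotoneOn t (Iic N)) {k : ℕ} (hk : k < N) {s : ℝ}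
    (hs : s ∈ Icc (t k) (t (k + 1))) :
    ∫ x in (t k)..s, stepFunction N t c x = (s - t k) • c k := by
  rw [← intervalIntegral.integral_const]
  refine intervalIntegral.integral_congr_ae (.of_forall fun x hx => ?_)
  rw [uIoc_of_le hs.1] at hx
  exact stepFunction_apply ht hk ⟨hx.1, hx.2.trans hs.2⟩

lemma integral_stepFunction_eq_sum (ht : MonotoneOn t (Iic N)) {k : ℕ} (hk : k ≤ N) :
    ∫ x in (t 0)..(t k), stepFunction N t c x =
      ∑ i ∈ Finset.range k, (t (i + 1) - t i) • c i := by
  rw [← intervalIntegral.sum_integral_adjacent_intervals fun _ _ =>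
    intervalIntegrable_stepFunction _ _]
  refine Finset.sum_congr rfl fun i hi => ?_
  have hiN := (Finset.mem_range.1 hi).trans_le hk
  exact integral_stepFunction ht hiN (right_mem_Icc.2 (ht hiN.le hiN i.le_succ))

end StepFunction

section Interpolation

variable {E : Type*} [NormedAddCommGroup E] [NormedSpace ℝ E]

/-- A bound, in units of the squared step size, for the error of affinely interpolated forces. -/
def consistencyBound (ω : ℝ → ℝ) (C Λ T : ℝ) : ℝ :=
  2 * (ω T - ω 0 + C * Λ ^ 2 * T)

/-- The residual of the piecewise affine interpolant on the `k`-th interval: the discrete defect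
plus the consistency error of affinely interpolated forces. -/
def discreteResidual (B : E → E →L[ℝ] ℝ) (f : ℝ → E →L[ℝ] ℝ) (ω : ℝ → ℝ) (C Λ : ℝ) (t : ℕ → ℝ)
    (w : ℕ → E) (k : ℕ) : ℝ :=
  discreteDefect B f t w k + 2 * (t (k + 1) - t k) *
    (ω (t (k + 1)) - ω (t k) + C * Λ ^ 2 * (t (k + 1) - t k))

namespace IsEulerApprox

variable {B : E → E →L[ℝ] ℝ} {H : E → E →L[ℝ] E →L[ℝ] ℝ} {f f' : ℝ → E →L[ℝ] ℝ}
  {K : Set (E →L[ℝ] ℝ)} {ω : ℝ → ℝ} {κ C L Λ r τ T : ℝ} {z₀ : E} {N k : ℕ} {t : ℕ → ℝ}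
  {w : ℕ → E}

lemma time_monotoneOn (h : IsEulerApprox B f K Λ τ T z₀ N t w) : MonotoneOn t (Iic N) :=
  fun _ _ _ hl hkl => h.time_le hkl hl

lemma consistency_mem (h : IsEulerApprox B f K Λ τ T z₀ N t w)
    (hf : IsBVLoad f f' ω L T) (hC : 0 ≤ C) (hk : k < N) :
    2 * (ω (t (k + 1)) - ω (t k) + C * Λ ^ 2 * (t (k + 1) - t k)) ∈
      Icc 0 (consistencyBound ω C Λ T) := by
  have hh := sub_nonneg.2 (h.time_lt k hk).le
  have hω := sub_nonneg.2 (hf.monotoneOn (h.time_mem hk.le) (h.time_mem hk) (h.time_lt k hk).le)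
  refine ⟨by positivity, ?_⟩
  have hstep : t (k + 1) - t k ≤ T := by linarith [(h.time_mem hk).2, (h.time_mem hk.le).1]
  rw [consistencyBound]
  gcongr
  · exact (h.variation_time_mem hf hk).2
  · exact (h.variation_time_mem hf hk.le).1

lemma discreteDefect_le_discreteResidual (h : IsEulerApprox B f K Λ τ T z₀ N t w)
    (hf : IsBVLoad f f' ω L T) (hC : 0 ≤ C) (hk : k < N) :
    discreteDefect B f t w k ≤ discreteResidual B f ω C Λ t w k := by
  have hconsistency := mul_nonneg (sub_nonneg.2 (h.time_lt k hk).le)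
    (h.consistency_mem (Λ := Λ) hf hC hk).1
  rw [discreteResidual]
  linarith

lemma discreteResidual_le (h : IsEulerApprox B f K Λ τ T z₀ N t w) (hB : IsConvexGradient B H κ C r)
    (hf : IsBVLoad f f' ω L T) (hk : k < N) :
    discreteResidual B f ω C Λ t w k ≤
      (L * Λ + consistencyBound ω C Λ T) * (t (k + 1) - t k) := by
  have hconsistency := mul_le_mul_of_nonneg_left
    (h.consistency_mem (Λ := Λ) hf hB.C_nonneg hk).2 (sub_nonneg.2 (h.time_lt k hk).le)
  rw [discreteResidual]
  linarith [h.discreteDefect_le hB hf hk]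

lemma discreteResidual_le_mul (h : IsEulerApprox B f K Λ τ T z₀ N t w)
    (hB : IsConvexGradient B H κ C r) (hf : IsBVLoad f f' ω L T) (hΛ : 0 ≤ Λ) (hr : 0 ≤ r)
    (hL : 0 ≤ L) (hk : k < N) :
    discreteResidual B f ω C Λ t w k ≤
      (defectBound ω C L (‖H 0‖ + C * r) Λ T + consistencyBound ω C Λ T) * τ := by
  have hC := hB.C_nonneg
  have hT : 0 ≤ T := (h.time_mem hk).1.trans (h.time_mem hk).2
  have hω : 0 ≤ ω T - ω 0 :=
    sub_nonneg.2 (hf.monotoneOn (left_mem_Icc.2 hT) (right_mem_Icc.2 hT) hT)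
  have hdefect : L * Λ ≤ defectBound ω C L (‖H 0‖ + C * r) Λ T :=
    le_add_of_nonneg_left (by positivity)
  have hconsistency : 0 ≤ consistencyBound ω C Λ T := by
    rw [consistencyBound]
    positivity
  refine (h.discreteResidual_le hB hf hk).trans ?_
  exact mul_le_mul (by gcongr) (h.time_sub_le k hk) (sub_nonneg.2 (h.time_lt k hk).le)
    (add_nonneg ((mul_nonneg hL hΛ).trans hdefect) hconsistency)

lemma sum_mul_discreteResidual_le (h : IsEulerApprox B f K Λ τ T z₀ N t w)
    (hB : IsConvexGradient B H κ C r) (hf : IsBVLoad f f' ω L T) (hΛ : 0 ≤ Λ)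
    (hr : ‖z₀‖ + Λ * T ≤ r) (hT : 0 < T) (hL : 0 ≤ L) :
    ∑ k ∈ Finset.range N, (t (k + 1) - t k) * discreteResidual B f ω C Λ t w k ≤
      (defectBound ω C L (‖H 0‖ + C * r) Λ T + consistencyBound ω C Λ T) * τ ^ 2 := by
  have hC := hB.C_nonneg
  have hsq : ∀ k ∈ Finset.range N, (t (k + 1) - t k) * discreteResidual B f ω C Λ t w k ≤
      (t (k + 1) - t k) * discreteDefect B f t w k + 2 * τ ^ 2 *
        ((ω (t (k + 1)) + C * Λ ^ 2 * t (k + 1)) - (ω (t k) + C * Λ ^ 2 * t k)) := fun k hk => by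
    have hk := Finset.mem_range.1 hk
    have hh := sub_nonneg.2 (h.time_lt k hk).le
    have hmesh := mul_le_mul_of_nonneg_right (pow_le_pow_left₀ hh (h.time_sub_le k hk) 2)
      (h.consistency_mem (Λ := Λ) hf hC hk).1
    rw [discreteResidual]
    linarith
  refine (Finset.sum_le_sum hsq).trans ?_
  rw [Finset.sum_add_distrib, ← Finset.mul_sum,
    Finset.sum_range_sub (fun k => ω (t k) + C * Λ ^ 2 * t k), h.time_zero, h.time_last,
    consistencyBound]
  linarith [h.sum_mul_discreteDefect_le hB hf hΛ hr hT hL]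

end IsEulerApprox

end Interpolation

section AffineInterpolant

variable {E : Type*} [NormedAddCommGroup E] [NormedSpace ℝ E]

/-- The piecewise affine curve through the points `w 0, …, w N` at the times `t 0, …, t N`, encoded
as the primitive of the discrete velocity. -/
def affineInterpolant (N : ℕ) (t : ℕ → ℝ) (w : ℕ → E) (s : ℝ) : E :=
  w 0 + ∫ x in (t 0)..s, stepFunction N t (discreteVelocity t w) x

namespace IsEulerApprox

variable {B : E → E →L[ℝ] ℝ} {H : E → E →L[ℝ] E →L[ℝ] ℝ} {f f' : ℝ → E →L[ℝ] ℝ}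
  {K : Set (E →L[ℝ] ℝ)} {ω : ℝ → ℝ} {κ C L Λ r τ T : ℝ} {z₀ : E} {N k : ℕ} {t : ℕ → ℝ}
  {w : ℕ → E}

lemma isPrimitive_affineInterpolant (h : IsEulerApprox B f K Λ τ T z₀ N t w) :
    IsPrimitive (affineInterpolant N t w) (stepFunction N t (discreteVelocity t w)) z₀ T where
  intervalIntegrable := intervalIntegrable_stepFunction _ _
  eq_add_integral s _ := by rw [affineInterpolant, h.zero, h.time_zero]

variable [CompleteSpace E]

lemma affineInterpolant_apply (h : IsEulerApprox B f K Λ τ T z₀ N t w) (hk : k < N) {s : ℝ}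
    (hs : s ∈ Icc (t k) (t (k + 1))) :
    affineInterpolant N t w s = w k + (s - t k) • discreteVelocity t w k := by
  have htelescope : ∑ i ∈ Finset.range k, (t (i + 1) - t i) • discreteVelocity t w i =
      w k - w 0 := by
    rw [← Finset.sum_range_sub]
    exact Finset.sum_congr rfl fun i hi =>
      (h.sub_eq_smul_discreteVelocity ((Finset.mem_range.1 hi).trans hk)).symm
  rw [affineInterpolant, ← intervalIntegral.integral_add_adjacent_intervals (b := t k)
      (intervalIntegrable_stepFunction _ _) (intervalIntegrable_stepFunction _ _),
    integral_stepFunction_eq_sum h.time_monotoneOn hk.le,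
    integral_stepFunction h.time_monotoneOn hk hs, htelescope]
  abel

lemma isApproxNormal_affineInterpolant (h : IsEulerApprox B f K Λ τ T z₀ N t w)
    (hB : IsConvexGradient B H κ C r) (hf : IsBVLoad f f' ω L T) (hK : Convex ℝ K) (hΛ : 0 ≤ Λ)
    (hr : ‖z₀‖ + Λ * T ≤ r) (hk : k < N) {s : ℝ} (hs : s ∈ Icc (t k) (t (k + 1))) :
    IsApproxNormal K (discreteResidual B f ω C Λ t w k) (f s - B (affineInterpolant N t w s))
      (discreteVelocity t w k) := by
  set v := discreteVelocity t w k
  set σ := f (t k) - B (w k)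
  set σ' := f (t (k + 1)) - B (w (k + 1))
  set θ := (s - t k) / (t (k + 1) - t k)
  have hh : 0 < t (k + 1) - t k := sub_pos.2 (h.time_lt k hk)
  have hθ : 0 ≤ θ := div_nonneg (sub_nonneg.2 hs.1) hh.le
  have hθ₁ : θ ≤ 1 := (div_le_one hh).2 (sub_le_sub_right hs.2 _)
  have hdefect : σ' v = σ v + discreteDefect B f t w k := (add_sub_cancel (σ v) (σ' v)).symm
  have hdefect_nonneg := h.discreteDefect_nonneg hk
  refine ⟨σ + θ • (σ' - σ), ?_, ?_, fun η hη => ?_⟩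
  · exact hK.add_smul_sub_mem (h.force_mem k hk.le) (h.force_mem (k + 1) hk) ⟨hθ, hθ₁⟩
  · rw [h.affineInterpolant_apply hk hs, discreteResidual]
    refine le_add_of_nonneg_of_le hdefect_nonneg ?_
    exact hB.norm_add_smul_force_sub_le hf (h.time_mem hk.le).1 (h.time_lt k hk)
      (h.time_mem (k := k + 1) hk).2 hs (h.norm_apply_le hΛ hr hk.le) (h.norm_apply_le hΛ hr hk)
      (h.norm_discreteVelocity_le hk) (h.sub_eq_smul_discreteVelocity hk)
  · calc η v ≤ σ' v := h.apply_discreteVelocity_le hk hη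
      _ = (σ + θ • (σ' - σ)) v + (1 - θ) * discreteDefect B f t w k := by
        have hinterp : (σ + θ • (σ' - σ)) v = σ v + θ * discreteDefect B f t w k := rfl
        rw [hinterp, hdefect]
        ring
      _ ≤ (σ + θ • (σ' - σ)) v + discreteResidual B f ω C Λ t w k := by
        gcongr
        exact (mul_le_of_le_one_left hdefect_nonneg (sub_le_self 1 hθ)).trans
          (h.discreteDefect_le_discreteResidual hf hB.C_nonneg hk)

lemma isApproxSolution_affineInterpolant (h : IsEulerApprox B f K Λ τ T z₀ N t w)
    (hB : IsConvexGradient B H κ C r) (hf : IsBVLoad f f' ω L T) (hK : Convex ℝ K) (hΛ : 0 ≤ Λ)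
    (hr : ‖z₀‖ + Λ * T ≤ r) :
    IsApproxSolution B f K (stepFunction N t (discreteResidual B f ω C Λ t w)) T z₀
      (affineInterpolant N t w) (stepFunction N t (discreteVelocity t w)) where
  isPrimitive := h.isPrimitive_affineInterpolant
  flow := by
    refine ae_restrict_of_forall_mem measurableSet_Ioo fun s hs => ?_
    rw [← h.time_zero, ← h.time_last] at hs
    obtain ⟨k, hk, hsk⟩ := exists_mem_Ioc_succ (Ioo_subset_Ioc_self hs)
    rw [stepFunction_apply h.time_monotoneOn hk hsk, stepFunction_apply h.time_monotoneOn hk hsk]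
    exact h.isApproxNormal_affineInterpolant hB hf hK hΛ hr hk (Ioc_subset_Icc_self hsk)

lemma isSecondOrderApprox (h : IsEulerApprox B f K Λ τ T z₀ N t w)
    (hB : IsConvexGradient B H κ C r) (hf : IsBVLoad f f' ω L T) (hK : Convex ℝ K) (hΛ : 0 ≤ Λ)
    (hr : ‖z₀‖ + Λ * T ≤ r) (hT : 0 < T) (hL : 0 ≤ L) :
    IsSecondOrderApprox B f K Λ
      (defectBound ω C L (‖H 0‖ + C * r) Λ T + consistencyBound ω C Λ T) τ
      (stepFunction N t (discreteResidual B f ω C Λ t w)) T z₀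
      (affineInterpolant N t w) (stepFunction N t (discreteVelocity t w)) where
  toIsApproxSolution := h.isApproxSolution_affineInterpolant hB hf hK hΛ hr
  norm_le := stepFunction_induction (P := fun v => ‖v‖ ≤ Λ) h.time_monotoneOn (by simpa)
    fun k hk => h.norm_discreteVelocity_le hk
  residual_nonneg := stepFunction_induction (P := (0 ≤ ·)) h.time_monotoneOn le_rfl fun k hk =>
    (h.discreteDefect_nonneg hk).trans (h.discreteDefect_le_discreteResidual hf hB.C_nonneg hk)
  residual_le := by
    have hr₀ : 0 ≤ r := (by positivity : 0 ≤ ‖z₀‖ + Λ * T).trans hr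
    have hN : 0 < N := Nat.pos_of_ne_zero fun hN => hT.ne (by rw [← h.time_last, hN, h.time_zero])
    have hle : ∀ k < N, _ := fun k hk => h.discreteResidual_le_mul hB hf hΛ hr₀ hL hk
    refine stepFunction_induction (P := (· ≤ _)) h.time_monotoneOn ?_ hle
    exact (h.discreteDefect_nonneg hN).trans <|
      (h.discreteDefect_le_discreteResidual hf hB.C_nonneg hN).trans (hle 0 hN)
  residual_intervalIntegrable := intervalIntegrable_stepFunction _ _
  integral_residual_le := by
    have hsum := integral_stepFunction_eq_sum (c := discreteResidual B f ω C Λ t w)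
      h.time_monotoneOn le_rfl
    rw [h.time_zero, h.time_last] at hsum
    rw [hsum]
    exact h.sum_mul_discreteResidual_le hB hf hΛ hr hT hL

end IsEulerApprox

end AffineInterpolant

section SemilinearEnergy

variable {E W : Type*} [NormedAddCommGroup E] [InnerProductSpace ℝ E]
  [NormedAddCommGroup W] [InnerProductSpace ℝ W] {A : E →L[ℝ] E →L[ℝ] ℝ} {F : E → ℝ}
  {DF : E → W →L[ℝ] ℝ} {D2F : E → E →L[ℝ] W →L[ℝ] ℝ} {R : W → ℝ} {ℓ ℓ' : ℝ → W →L[ℝ] ℝ}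
  {ι : E →L[ℝ] W} {κ ρ L T : ℝ} {z₀ : E}

/-- The derivative `Az + D_zF(z)` of the time-independent part of the energy. -/
def autonomousGradient (A : E →L[ℝ] E →L[ℝ] ℝ) (DF : E → W →L[ℝ] ℝ) (ι : E →L[ℝ] W) (z : E) :
    E →L[ℝ] ℝ :=
  A z + (DF z).comp ι

/-- The second derivative `D²_zI(t,z)` of the energy, which does not depend on `t`. -/
def energyHessian (A : E →L[ℝ] E →L[ℝ] ℝ) (D2F : E → E →L[ℝ] W →L[ℝ] ℝ) (ι : E →L[ℝ] W) (z : E) :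
    E →L[ℝ] E →L[ℝ] ℝ :=
  A + (ContinuousLinearMap.precomp ℝ ι).comp (D2F z)

lemma hasFDerivAt_clm_comp_const (hDF : ∀ w, HasFDerivAt DF (D2F w) w) (z : E) :
    HasFDerivAt (fun w => (DF w).comp ι) ((ContinuousLinearMap.precomp ℝ ι).comp (D2F z)) z :=
  HasFDerivAt.comp (g := ContinuousLinearMap.precomp ℝ ι) z
    (ContinuousLinearMap.precomp ℝ ι).hasFDerivAt (hDF z)

lemma hasFDerivAt_autonomousGradient (hDF : ∀ w, HasFDerivAt DF (D2F w) w) (z : E) :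
    HasFDerivAt (autonomousGradient A DF ι) (energyHessian A D2F ι z) z :=
  A.hasFDerivAt.add (hasFDerivAt_clm_comp_const hDF z)

lemma energyHessian_symm (hA : ∀ v w, A v w = A w v) (hF : ∀ w, HasFDerivAt F ((DF w).comp ι) w)
    (hDF : ∀ w, HasFDerivAt DF (D2F w) w) (z v w : E) :
    energyHessian A D2F ι z v w = energyHessian A D2F ι z w v :=
  congrArg₂ (· + ·) (hA v w) <|
    second_derivative_symmetric hF (hasFDerivAt_clm_comp_const hDF z) v w

lemma hasFDerivAt_energy (hA : ∀ v w, A v w = A w v) (hF : ∀ w, HasFDerivAt F ((DF w).comp ι) w)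
    (s : ℝ) (z : E) :
    HasFDerivAt (energy A F ℓ ι s) (autonomousGradient A DF ι z - (ℓ s).comp ι) z := by
  have hquad := (A.hasFDerivAt.clm_apply (hasFDerivAt_id z)).const_mul (1 / 2 : ℝ)
  refine ((hquad.add (hF z)).sub ((ℓ s).comp ι).hasFDerivAt).congr_fderiv ?_
  ext w
  simp [autonomousGradient, hA w z]
  ring

lemma exists_isConvexGradient (hA : ∀ v w, A v w = A w v)
    (hF : ∀ w, HasFDerivAt F ((DF w).comp ι) w) (hDF : ∀ w, HasFDerivAt DF (D2F w) w)
    (hC21 : ∀ r : ℝ, 0 < r → ∃ C : ℝ, 0 ≤ C ∧ ∀ z₁ z₂ v : E, ‖z₁‖ ≤ r → ‖z₂‖ ≤ r →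
      D2F z₁ v (ι v) - D2F z₂ v (ι v) ≤ C * ‖z₁ - z₂‖ * ‖v‖ ^ 2)
    (hconv : UniformlyConvex A D2F ι κ) {r : ℝ} (hr : 0 < r) :
    ∃ C, IsConvexGradient (autonomousGradient A DF ι) (energyHessian A D2F ι) κ C r := by
  obtain ⟨C, hC, hlip⟩ := hC21 r hr
  have hsymm := energyHessian_symm hA hF hDF
  refine ⟨C, hconv.1, hC, hasFDerivAt_autonomousGradient hDF, hsymm, hconv.2, fun x y hx hy => ?_⟩
  refine opNorm_le_of_abs_quadratic_le (fun v w => ?_) (by positivity) fun v => ?_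
  · rw [sub_apply, sub_apply, sub_apply, sub_apply, hsymm x, hsymm y]
  · have hcancel : (energyHessian A D2F ι x - energyHessian A D2F ι y) v v =
        D2F x v (ι v) - D2F y v (ι v) := add_sub_add_left_eq_sub _ _ (A v v)
    have hyx := hlip y x v hy hx
    rw [norm_sub_rev] at hyx
    rw [hcancel, abs_le]
    exact ⟨by linarith, hlip x y v hx hy⟩

lemma norm_clm_comp_le (hι : ∀ v, ‖ι v‖ ≤ ‖v‖) (ξ : W →L[ℝ] ℝ) : ‖ξ.comp ι‖ ≤ ‖ξ‖ :=
  ContinuousLinearMap.opNorm_le_bound _ (norm_nonneg ξ) fun v => ξ.le_opNorm_of_le (hι v)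

lemma exists_isBVLoad_comp (hι : ∀ v, ‖ι v‖ ≤ ‖v‖) {L : ℝ≥0}
    (hlip : LipschitzOnWith L ℓ (Icc 0 T)) (hℓ' : ∀ s ∈ Icc 0 T, HasDerivAt ℓ (ℓ' s) s)
    (hBV : BoundedVariationOn ℓ' (Icc 0 T)) :
    ∃ ω, IsBVLoad (fun s => (ℓ s).comp ι) (fun s => (ℓ' s).comp ι) ω L T := by
  obtain ⟨ω, hω⟩ := exists_norm_sub_le_of_boundedVariationOn hBV
  refine ⟨ω, fun s hs => ?_, fun x hx y hy => ?_, fun x hx y hy hxy => ?_⟩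
  · exact (ContinuousLinearMap.precomp ℝ ι).hasFDerivAt.comp_hasDerivAt s (hℓ' s hs)
  · rw [← ContinuousLinearMap.sub_comp]
    exact (norm_clm_comp_le hι _).trans (hlip.norm_sub_le hx hy)
  · rw [← ContinuousLinearMap.sub_comp]
    exact (norm_clm_comp_le hι _).trans (hω x hx y hy hxy)

lemma exists_subdiff_comp_add_DI_eq_zero_iff (hR : IsSublinear R) (hρ : ∀ v, R v ≤ ρ * ‖v‖)
    {s : ℝ} {v z : E} :
    (∃ ξ ∈ subdiff R (ι v), ξ.comp ι + DI A DF ℓ ι s z = 0) ↔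
      IsApproxNormal (stableForces fun v => R (ι v)) 0
        ((ℓ s).comp ι - autonomousGradient A DF ι z) v := by
  rw [isApproxNormal_zero_iff, ← hR.exists_subdiff_comp_eq_iff hρ]
  refine exists_congr fun ξ => and_congr_right fun _ => ?_
  rw [add_eq_zero_iff_eq_neg, DI, neg_sub, autonomousGradient]

lemma force_mem_stableForces (hR : IsSublinear R) (hρ : ∀ v, R v ≤ ρ * ‖v‖) {s : ℝ} {z : E}
    (hz : LocStable R A DF ℓ ι s z) :
    (ℓ s).comp ι - autonomousGradient A DF ι z ∈ stableForces fun v => R (ι v) := by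
  rw [LocStable, ← map_zero ι, exists_subdiff_comp_add_DI_eq_zero_iff hR hρ,
    isApproxNormal_zero_iff] at hz
  exact hz.1

lemma isDiffSol_iff (hR : IsSublinear R) (hρ : ∀ v, R v ≤ ρ * ‖v‖) (hT : 0 ≤ T) {y : ℝ → E} :
    IsDiffSol A DF ℓ R ι T z₀ y ↔
      ∃ v, IsApproxSolution (autonomousGradient A DF ι) (fun s => (ℓ s).comp ι)
        (stableForces fun v => R (ι v)) 0 T z₀ y v := by
  simp only [IsDiffSol, exists_subdiff_comp_add_DI_eq_zero_iff hR hρ]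
  refine ⟨fun ⟨_, v, hv, hint, hflow⟩ => ⟨v, ⟨hv, hint⟩, hflow⟩, fun ⟨v, hv⟩ => ?_⟩
  exact ⟨hv.isPrimitive.apply_zero hT, v, hv.isPrimitive.1, hv.isPrimitive.2, hv.flow⟩

end SemilinearEnergy

section Convergence

variable {E : Type*} [NormedAddCommGroup E] [CompleteSpace E]

/-- The scheme pairs the minimizer `z (k + 1)` with the load at time `t k`, while in physical time
it places `z k` there; the two interpolants differ by this shift of one node. -/
lemma IsEulerApprox.norm_add_smul_sub_affineInterpolant_le [NormedSpace ℝ E]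
    {B : E → E →L[ℝ] ℝ} {f : ℝ → E →L[ℝ] ℝ} {K : Set (E →L[ℝ] ℝ)} {Λ τ T c : ℝ}
    {z₀ : E} {N k : ℕ} {t : ℕ → ℝ} {z : ℕ → E}
    (h : IsEulerApprox B f K Λ τ T z₀ N t fun k => z (k + 1))
    (hz : ∀ k, ‖z (k + 1) - z k‖ ≤ c) (hk : k < N) {s : ℝ} (hs : s ∈ Icc (t k) (t (k + 1))) :
    ‖z k + ((s - t k) / (t (k + 1) - t k)) • (z (k + 1) - z k) -
      affineInterpolant N t (fun k => z (k + 1)) s‖ ≤ c := by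
  have hh : 0 < t (k + 1) - t k := sub_pos.2 (h.time_lt k hk)
  have hθ : (s - t k) / (t (k + 1) - t k) ∈ Icc 0 1 :=
    ⟨div_nonneg (sub_nonneg.2 hs.1) hh.le, (div_le_one hh).2 (sub_le_sub_right hs.2 _)⟩
  have hincrement : ∀ k, z k - z (k + 1) ∈ Metric.closedBall 0 c := fun k => by
    rw [mem_closedBall_zero_iff, norm_sub_rev]
    exact hz k
  have hmem := (convex_closedBall 0 c).add_smul_sub_mem (hincrement k) (hincrement (k + 1)) hθ
  rw [h.affineInterpolant_apply hk hs, discreteVelocity, smul_smul, ← div_eq_mul_inv,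
    ← mem_closedBall_zero_iff]
  convert hmem using 1
  module

theorem exists_isApproxSolution_zero_norm_interpolant_sub_le [InnerProductSpace ℝ E]
    {B : E → E →L[ℝ] ℝ} {H : E → E →L[ℝ] E →L[ℝ] ℝ} {f f' : ℝ → E →L[ℝ] ℝ} {K : Set (E →L[ℝ] ℝ)}
    {ω : ℝ → ℝ} {κ C L Λ r T : ℝ} {z₀ : E} {N : ℝ → ℕ} {t : ℝ → ℕ → ℝ} {z : ℝ → ℕ → E}
    (hB : IsConvexGradient B H κ C r) (hf : IsBVLoad f f' ω L T) (hK : IsClosed K)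
    (hKc : Convex ℝ K) (hΛ : 0 ≤ Λ) (hr : ‖z₀‖ + Λ * T ≤ r) (hT : 0 < T) (hL : 0 ≤ L)
    (h : ∀ τ, 0 < τ → IsEulerApprox B f K Λ τ T z₀ (N τ) (t τ) (fun k => z τ (k + 1)) ∧
      ∀ k, ‖z τ (k + 1) - z τ k‖ ≤ Λ * τ) :
    ∃ y v, IsApproxSolution B f K 0 T z₀ y v ∧ ∃ M : ℝ, 0 < M ∧
      ∀ τ, 0 < τ → ∀ k < N τ, ∀ s ∈ Icc (t τ k) (t τ (k + 1)),
        ‖z τ k + ((s - t τ k) / (t τ (k + 1) - t τ k)) • (z τ (k + 1) - z τ k) - y s‖ ≤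
          M * τ := by
  obtain ⟨y, v, hy, M, hM, hyM⟩ := exists_isApproxSolution_zero_norm_sub_le hK hB hr
    hf.norm_sub_le hT.le hL fun τ hτ => (h τ hτ).1.isSecondOrderApprox hB hf hKc hΛ hr hT hL
  refine ⟨y, v, hy, Λ + M + 1, by positivity, fun τ hτ k hk s hs => ?_⟩
  obtain ⟨hEuler, hstep⟩ := h τ hτ
  have hsT : s ∈ Icc 0 T := Icc_subset_Icc (hEuler.time_mem hk.le).1 (hEuler.time_mem hk).2 hs
  have hshift := hEuler.norm_add_smul_sub_affineInterpolant_le hstep hk hs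
  have htriangle := norm_sub_le_norm_sub_add_norm_sub
    (z τ k + ((s - t τ k) / (t τ (k + 1) - t τ k)) • (z τ (k + 1) - z τ k))
    (affineInterpolant (N τ) (t τ) (fun k => z τ (k + 1)) s) (y s)
  linarith [hyM τ hτ s hsT]

end Convergence

theorem statement7_general {E W : Type*} [NormedAddCommGroup E] [InnerProductSpace ℝ E]
    [CompleteSpace E] [NormedAddCommGroup W] [InnerProductSpace ℝ W]
    (ι : E →L[ℝ] W) (hι : ∀ w, ‖ι w‖ ≤ ‖w‖)
    (A : E →L[ℝ] E →L[ℝ] ℝ) (hA : ∀ v w, A v w = A w v)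
    (F : E → ℝ) (DF : E → W →L[ℝ] ℝ) (D2F : E → E →L[ℝ] W →L[ℝ] ℝ)
    (hF : ∀ w, HasFDerivAt F ((DF w).comp ι) w) (hDF : ∀ w, HasFDerivAt DF (D2F w) w)
    (hC21 : ∀ r : ℝ, 0 < r → ∃ Cr : ℝ, 0 ≤ Cr ∧ ∀ z₁ z₂ v : E, ‖z₁‖ ≤ r → ‖z₂‖ ≤ r →
      D2F z₁ v (ι v) - D2F z₂ v (ι v) ≤ Cr * ‖z₁ - z₂‖ * ‖v‖ ^ 2)
    (κ : ℝ) (hconv : UniformlyConvex A D2F ι κ)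
    (R : W → ℝ) (hR : ConvexOn ℝ univ R) (hR_smul : ∀ (c : ℝ) v, 0 ≤ c → R (c • v) = c * R v)
    (ρ : ℝ) (hρ : ∀ v, R v ≤ ρ * ‖v‖)
    (T : ℝ) (hT : 0 < T) (ℓ ℓ' : ℝ → W →L[ℝ] ℝ) (L : ℝ≥0) (hL : L < κ)
    (hℓ : LipschitzOnWith L ℓ (Icc 0 T)) (hℓ' : ∀ s ∈ Icc 0 T, HasDerivAt ℓ (ℓ' s) s)
    (hℓ'BV : BoundedVariationOn ℓ' (Icc 0 T))
    (z₀ : E) (hz₀ : LocStable R A DF ℓ ι 0 z₀)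
    (t : ℝ → ℕ → ℝ) (z : ℝ → ℕ → E)
    (hscheme : ∀ τ : ℝ, 0 < τ → Scheme A F R ℓ ι T τ z₀ (t τ) (z τ))
    (N : ℝ → ℕ) (hN : ∀ τ : ℝ, 0 < τ → t τ (N τ) = T ∧ ∀ j < N τ, t τ j < T) :
    ∃ y, IsDiffSol A DF ℓ R ι T z₀ y ∧
      (∀ y₂, IsDiffSol A DF ℓ R ι T z₀ y₂ → ∀ s ∈ Icc 0 T, y₂ s = y s) ∧
      ∃ K : ℝ, 0 < K ∧ ∀ τ, 0 < τ → ∀ k, 1 ≤ k → k ≤ N τ →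
        ∀ s ∈ Icc (t τ (k - 1)) (t τ k),
          ‖(z τ (k - 1) + ((s - t τ (k - 1)) / (t τ k - t τ (k - 1))) •
              (z τ k - z τ (k - 1))) - y s‖ ≤ K * τ := by
  have hsub := isSublinear_of_convexOn hR hR_smul
  set Λ : ℝ := L / κ
  have hΛ : 0 ≤ Λ := div_nonneg L.2 hconv.1.le
  have hΛ₁ : Λ < 1 := (div_lt_one hconv.1).2 hL
  have hκΛ : κ * Λ = L := mul_div_cancel₀ _ hconv.1.ne'
  have hr : 0 < ‖z₀‖ + Λ * T + 1 := by positivity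
  have hB := fun r (hr : 0 < r) => exists_isConvexGradient hA hF hDF hC21 hconv hr
  obtain ⟨C, hBr⟩ := hB _ hr
  obtain ⟨ω, hload⟩ := exists_isBVLoad_comp hι hℓ hℓ' hℓ'BV
  have hEuler := fun τ (hτ : 0 < τ) => (hscheme τ hτ).isEulerApprox hT.le hτ hBr hsub hι hΛ hΛ₁
    (hκΛ ▸ hload.norm_sub_le) (hasFDerivAt_energy hA hF) (force_mem_stableForces hsub hρ hz₀)
    (hN τ hτ)
  obtain ⟨y, v, hy, M, hM, hrate⟩ := exists_isApproxSolution_zero_norm_interpolant_sub_le hBr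
    hload (isClosed_stableForces _) (convex_stableForces _) hΛ
    (le_add_of_nonneg_right zero_le_one) hT L.2 hEuler
  refine ⟨y, (isDiffSol_iff hsub hρ hT.le).2 ⟨v, hy⟩, fun y₂ hy₂ => ?_, M, hM,
    fun τ hτ k hk hkN => ?_⟩
  · obtain ⟨v₂, hy₂⟩ := (isDiffSol_iff hsub hρ hT.le).1 hy₂
    exact hy₂.eqOn hB hy
  · obtain ⟨k, rfl⟩ := Nat.exists_eq_add_of_le' hk
    exact hrate τ hτ k hkN

end

/-- Theorem 3.9: assume `I(t,·) ∈ C^{2,1}_loc(Z;ℝ)`, the energy is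
`κ`-uniformly convex, `|ℓ|_Lip ≤ κ − δ` for some `δ ∈ (0,κ]`, `ℓ ∈ W^{1,∞}([0,T];V*)`
and `ℓ′ ∈ BV([0,T];V)`. Then the rate-independent system has a unique differential
solution `y`, and the piecewise affine interpolants in physical time of the iterates
of the local incremental minimization scheme converge to `y` with
`‖z_τ(s) − y(s)‖_Z ≤ K τ` for all `s ∈ [0,T]`, with `K` independent of `τ`. -/
theorem statement7
    (ι : Z →L[ℝ] V) (ιX : V →L[ℝ] X)
    (A : Z →L[ℝ] Z →L[ℝ] ℝ) (α : ℝ) (F : Z → ℝ) (DF : Z → V →L[ℝ] ℝ)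
    (D2F : Z → Z →L[ℝ] V →L[ℝ] ℝ) (R : V → ℝ) (ℓ : ℝ → V →L[ℝ] ℝ) (L T : ℝ)
    (hstand : StandingAssumptions ι ιX A α F DF D2F R ℓ L T)
    (hC21 : ∀ r : ℝ, 0 < r → ∃ Cr : ℝ, 0 ≤ Cr ∧ ∀ z₁ z₂ v : Z,
      ‖z₁‖ ≤ r → ‖z₂‖ ≤ r →
      D2F z₁ v (ι v) - D2F z₂ v (ι v) ≤ Cr * ‖z₁ - z₂‖ * ‖v‖ ^ 2)
    (κ : ℝ) (hconv : UniformlyConvex A D2F ι κ)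
    (δ : ℝ) (hδ0 : 0 < δ) (hδκ : δ ≤ κ) (hLsmall : L ≤ κ - δ)
    (ℓ' : ℝ → V →L[ℝ] ℝ)
    (hℓ' : ∀ s ∈ Set.Icc (0 : ℝ) T, HasDerivAt ℓ (ℓ' s) s)
    (hℓ'BV : BoundedVariationOn ℓ' (Set.Icc (0 : ℝ) T))
    (z₀ : Z) (hz₀ : LocStable R A DF ℓ ι 0 z₀)
    (t : ℝ → ℕ → ℝ) (z : ℝ → ℕ → Z)
    (hscheme : ∀ τ : ℝ, 0 < τ → Scheme A F R ℓ ι T τ z₀ (t τ) (z τ))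
    (N : ℝ → ℕ)
    (hN : ∀ τ : ℝ, 0 < τ → t τ (N τ) = T ∧ ∀ j : ℕ, j < N τ → t τ j < T) :
    ∃ y : ℝ → Z, IsDiffSol A DF ℓ R ι T z₀ y ∧
      (∀ y₂ : ℝ → Z, IsDiffSol A DF ℓ R ι T z₀ y₂ →
        ∀ s ∈ Set.Icc (0 : ℝ) T, y₂ s = y s) ∧
      ∃ K : ℝ, 0 < K ∧ ∀ τ : ℝ, 0 < τ → ∀ k : ℕ, 1 ≤ k → k ≤ N τ →
        ∀ s ∈ Set.Icc (t τ (k - 1)) (t τ k),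
          ‖(z τ (k - 1) + ((s - t τ (k - 1)) / (t τ k - t τ (k - 1))) •
              (z τ k - z τ (k - 1))) - y s‖ ≤ K * τ := by
  obtain ⟨-, -, hι, -, hA, -, -, -, hF, hDF, -, hL, hℓ, hT, hR, -, -, hR_smul, _, ρ, -, -,
    hρ⟩ := hstand
  exact statement7_general ι hι A hA F DF D2F hF hDF hC21 κ hconv R hR hR_smul ρ
    (fun v => (hρ v).2) T hT ℓ ℓ' L.toNNReal (by rw [Real.coe_toNNReal L hL]; linarith) hℓ hℓ'
    hℓ'BV z₀ hz₀ t z hscheme N hN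

end RIS
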